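/- (Singular Moser–Trudinger inequality in the Cartesian product of Sobolev spaces, sufficiency part.) Let n ≥ 2 be an integer, Ω ⊂ ℝ^n a bounded open set, λ ∈ [0, n), and β > 0 a real number satisfying (2^{(n−2)/(n−1)} β)/α_n + λ/n ≤ 1. Then there exists a finite constant C such that for all u, v ∈ C_c^∞(Ω) with ∫_Ω |∇u|^n dx + ∫_Ω |∇v|^n dx ≤ 1, one has ∫_Ω exp(β (|u(x)|^{n/(n−1)} + |v(x)|^{n/(n−1)})) / |x|^λ dx ≤ C. -/

import Mathlib

/-! The core is the singular Moser–Trudinger inequality for one function,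
`scalar_moser_trudinger`, with exponent `(1 - lam / n) α_n`. It is proved without symmetrization.

*Capacity.* A compactly supported `w` satisfies `ω_{n-1} |w| ≤ |∇w| * ‖·‖^{1-n}`
(`potential_estimate`). Integrating over a set `S` of volume `r^n` on which `|w| ≥ M`, and estimating
the `L^{n/(n-1)}` norm of the potential of `S`, gives with `A` the energy of `w`
`α_n M^{n/(n-1)} ≤ A^{1/(n-1)} (log (D^n / |S|) + 2 n + α_n)` (`capacity_estimate`). The coefficient of
the logarithm is sharp, and the additive constant depends only on `n`.

*Levels.* Let `u` have energy at most `1` and let `m(τ)` be the volume of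
`{α_n |u|^{n/(n-1)} ≥ τ}`. Then `τ ≤ log (K / m(τ))`, that is, `g(τ) := log (K / m(τ)) - τ ≥ 0`
(`level_le`). This alone makes `e^τ m(τ)` bounded, but not integrable in `τ`. The extra input is that
`g` can be small only on a short set: if `g ≤ l` at two levels `τ₁ < τ₂`, with `τ₁` at least a
multiple of `l`, then `τ₂ - τ₁ = O(l)` (`level_gap_volume`). Indeed almost all the energy is already
spent below `τ₁`, so doubling the slope of `u` above that level costs little, and the capacity
estimate for the modified function, which is larger at the level `τ₂`, leaves little room.
Consequently `{g ≤ l}` has measure `O(l + 1)` and `∫ exp (-γ g) dτ` is bounded for every `γ > 0`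
(`lintegral_profile_le`).

*Weight.* A set of volume `m` has mass at most a multiple of `m^γ`, `γ = 1 - lam / n`, for the measure
`‖x‖^{-lam} dx` (`lintegral_weight_le`). By the layer cake formula the scalar integral is bounded by
the mass of the ball plus a multiple of `∫ e^{γ τ} m(τ)^γ dτ`, which is a multiple of
`∫ exp (-γ g) dτ`.

*Product.* Normalize `u` and `v` to energy at most `1`. If `A`, `B` are their energies, the exponent is
`β (A^{1/(n-1)} X + B^{1/(n-1)} Y)` with `X`, `Y` the powers of the normalized functions. The power mean
inequality gives `A^{1/(n-1)} + B^{1/(n-1)} ≤ 2_n`, and `2_n β ≤ (1 - lam / n) α_n`, so the exponent is at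
most `(1 - lam / n) α_n max X Y`, and the integral is at most the sum of two scalar ones. -/

open MeasureTheory Real

noncomputable section

/-- `ω_{n-1}`, the surface area of the unit sphere `S^{n-1} ⊂ ℝⁿ`. -/
def sphereArea (n : ℕ) : ℝ := 2 * Real.pi ^ ((n : ℝ) / 2) / Real.Gamma ((n : ℝ) / 2)

/-- The Moser constant `α_n = n ω_{n-1}^{1/(n-1)}`. -/
def moserConst (n : ℕ) : ℝ := (n : ℝ) * sphereArea n ^ (1 / ((n : ℝ) - 1))

/-- `u ∈ C_c^∞(Ω)`: `u` is smooth with compact support contained in `Ω`. -/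
def IsCcSmooth {n : ℕ} (Ω : Set (EuclideanSpace ℝ (Fin n)))
    (u : EuclideanSpace ℝ (Fin n) → ℝ) : Prop :=
  ContDiff ℝ (⊤ : ℕ∞) u ∧ HasCompactSupport u ∧ tsupport u ⊆ Ω

open scoped ENNReal Topology

/-! ### Polar coordinates and the Riesz potential -/

lemma sphereArea_pos {n : ℕ} (hn : 2 ≤ n) : 0 < sphereArea n := by
  have : (0 : ℝ) < n := by positivity
  unfold sphereArea
  have := Real.Gamma_pos_of_pos (s := (n : ℝ) / 2) (by positivity)
  positivity

/-- The surface measure of the unit sphere has total mass `ω_{n-1}`. -/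
lemma toSphere_univ {n : ℕ} (hn : 2 ≤ n) :
    (volume : Measure (EuclideanSpace ℝ (Fin n))).toSphere Set.univ =
      ENNReal.ofReal (sphereArea n) := by
  have hn0 : (0 : ℝ) < n := by positivity
  have : Nonempty (Fin n) := ⟨⟨0, by lia⟩⟩
  rw [Measure.toSphere_apply_univ, EuclideanSpace.volume_ball, finrank_euclideanSpace]
  simp only [Fintype.card_fin, ENNReal.ofReal_one, one_pow, one_mul]
  rw [← ENNReal.ofReal_natCast, ← ENNReal.ofReal_mul hn0.le, Real.Gamma_add_one (by positivity)]
  congr 1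
  unfold sphereArea
  have := Real.Gamma_pos_of_pos (s := (n : ℝ) / 2) (by positivity)
  rw [Real.sqrt_eq_rpow, ← Real.rpow_natCast, ← Real.rpow_mul pi_pos.le]
  rw [show (1 / 2 * (n : ℝ)) = n / 2 by ring]
  field_simp

lemma lintegral_polar {n : ℕ} (hn : 2 ≤ n) {f : EuclideanSpace ℝ (Fin n) → ℝ≥0∞}
    (hf : Measurable f) :
    ∫⁻ x, f x = ∫⁻ θ : Metric.sphere (0 : EuclideanSpace ℝ (Fin n)) 1,
      (∫⁻ r in Set.Ioi (0 : ℝ), ENNReal.ofReal (r ^ (n - 1)) * f (r • (θ : EuclideanSpace ℝ (Fin n))))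
      ∂(volume : Measure (EuclideanSpace ℝ (Fin n))).toSphere := by
  have : Nonempty (Fin n) := ⟨⟨0, by lia⟩⟩
  have hmp := Measure.measurePreserving_homeomorphUnitSphereProd
    (volume : Measure (EuclideanSpace ℝ (Fin n)))
  have h1 : ∫⁻ x, f x = ∫⁻ x : ({0}ᶜ : Set (EuclideanSpace ℝ (Fin n))),
      f (x : EuclideanSpace ℝ (Fin n)) ∂(volume.comap Subtype.val) := by
    rw [lintegral_subtype_comap (measurableSet_singleton _).compl, restrict_compl_singleton]
  have hg : Measurable (fun p : Metric.sphere (0 : EuclideanSpace ℝ (Fin n)) 1 × Set.Ioi (0 : ℝ) =>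
      f ((p.2 : ℝ) • (p.1 : EuclideanSpace ℝ (Fin n)))) := by
    apply hf.comp
    exact (measurable_subtype_coe.comp measurable_snd).smul
      (measurable_subtype_coe.comp measurable_fst)
  have h2 := hmp.lintegral_comp_emb (Homeomorph.measurableEmbedding _)
    (fun p : Metric.sphere (0 : EuclideanSpace ℝ (Fin n)) 1 × Set.Ioi (0 : ℝ) =>
      f ((p.2 : ℝ) • (p.1 : EuclideanSpace ℝ (Fin n))))
  rw [h1]
  have h3 : ∀ x : ({0}ᶜ : Set (EuclideanSpace ℝ (Fin n))),
      ((homeomorphUnitSphereProd (EuclideanSpace ℝ (Fin n)) x).2 : ℝ) •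
      ((homeomorphUnitSphereProd (EuclideanSpace ℝ (Fin n)) x).1 : EuclideanSpace ℝ (Fin n)) = x := by
    intro x
    have : ‖(x : EuclideanSpace ℝ (Fin n))‖ ≠ 0 := by
      exact norm_ne_zero_iff.2 x.2
    simp [smul_smul, this]
  simp only [h3] at h2
  rw [h2, lintegral_prod _ hg.aemeasurable]
  refine lintegral_congr fun θ => ?_
  have hm : Measurable (fun r : Set.Ioi (0 : ℝ) =>
      f ((r : ℝ) • (θ : EuclideanSpace ℝ (Fin n)))) :=
    hf.comp (measurable_subtype_coe.smul_const _)
  rw [Measure.volumeIoiPow, lintegral_withDensity_eq_lintegral_mul _ _ hm]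
  · simp only [Pi.mul_apply, finrank_euclideanSpace, Fintype.card_fin]
    exact lintegral_subtype_comap measurableSet_Ioi
      (fun r : ℝ => ENNReal.ofReal (r ^ (n - 1)) * f (r • (θ : EuclideanSpace ℝ (Fin n))))
  · exact (measurable_subtype_coe.pow_const _).ennreal_ofReal

lemma lintegral_radial {n : ℕ} (hn : 2 ≤ n) {f : ℝ → ℝ≥0∞} (hf : Measurable f) :
    ∫⁻ x : EuclideanSpace ℝ (Fin n), f ‖x‖ = ENNReal.ofReal (sphereArea n) *
      ∫⁻ r in Set.Ioi (0 : ℝ), ENNReal.ofReal (r ^ (n - 1)) * f r := by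
  rw [lintegral_polar hn (f := fun x => f ‖x‖) (hf.comp measurable_norm)]
  have : ∀ θ : Metric.sphere (0 : EuclideanSpace ℝ (Fin n)) 1,
      (∫⁻ r in Set.Ioi (0 : ℝ), ENNReal.ofReal (r ^ (n - 1)) *
        f ‖r • (θ : EuclideanSpace ℝ (Fin n))‖) =
      ∫⁻ r in Set.Ioi (0 : ℝ), ENNReal.ofReal (r ^ (n - 1)) * f r := by
    intro θ
    refine setLIntegral_congr_fun measurableSet_Ioi fun r hr => ?_
    simp [norm_smul, abs_of_pos (Set.mem_Ioi.1 hr)]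
  simp only [this, lintegral_const, toSphere_univ hn]
  rw [mul_comm]

/-- The Riesz kernel `‖z‖^{1-n}` of order one. -/
def rieszKernel {n : ℕ} (z : EuclideanSpace ℝ (Fin n)) : ℝ≥0∞ :=
  ENNReal.ofReal ((‖z‖ ^ (n - 1))⁻¹)

lemma measurable_rieszKernel {n : ℕ} :
    Measurable (rieszKernel : EuclideanSpace ℝ (Fin n) → ℝ≥0∞) := by
  unfold rieszKernel
  fun_prop

/-- The fundamental theorem of calculus along the ray from `x` in the direction `θ`. -/
lemma enorm_le_lintegral_ray {n : ℕ} {w : EuclideanSpace ℝ (Fin n) → ℝ}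
    (hw : ContDiff ℝ 1 w) (hc : HasCompactSupport w) (x : EuclideanSpace ℝ (Fin n))
    (θ : Metric.sphere (0 : EuclideanSpace ℝ (Fin n)) 1) :
    ‖w x‖ₑ ≤ ∫⁻ r in Set.Ioi (0 : ℝ),
      ‖fderiv ℝ w (x + r • (θ : EuclideanSpace ℝ (Fin n)))‖ₑ := by
  obtain ⟨v, hv⟩ := θ
  rw [mem_sphere_zero_iff_norm] at hv
  set g : ℝ → ℝ := fun r => w (x - r • v) with hg
  have hg1 : ContDiff ℝ 1 g := by fun_prop
  have hgc : HasCompactSupport g := by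
    refine hc.comp_isClosedEmbedding (g := fun r : ℝ => x - r • v) ?_
    have : Isometry (fun r : ℝ => x - r • v) := by
      refine Isometry.of_dist_eq fun a b => ?_
      rw [dist_eq_norm, dist_eq_norm, show x - a • v - (x - b • v) = (b - a) • v by module,
        norm_smul, hv, mul_one, norm_sub_rev]
    exact this.isClosedEmbedding
  have h := hgc.enorm_le_lintegral_Ici_deriv hg1 0
  have h0 : g 0 = w x := by simp [hg]
  rw [h0] at h
  refine h.trans ?_
  have hd : ∀ r, ‖deriv g r‖ₑ ≤ ‖fderiv ℝ w (x + (-r) • v)‖ₑ := by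
    intro r
    have h1 : HasDerivAt (fun r : ℝ => x - r • v) (-v) r := by
      simpa using ((hasDerivAt_id r).smul_const v).const_sub x
    have h2 := ((hw.differentiable one_ne_zero) (x - r • v)).hasFDerivAt.comp_hasDerivAt r h1
    have h3 : deriv g r = fderiv ℝ w (x - r • v) (-v) := h2.deriv
    rw [h3, neg_smul, ← sub_eq_add_neg]
    refine (ContinuousLinearMap.le_opENorm _ _).trans ?_
    have : ‖-v‖ₑ = 1 := by
      rw [enorm_neg, ← ofReal_norm, hv]; simp
    rw [this, mul_one]
  refine (lintegral_mono hd).trans ?_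
  have hmp := (Measure.measurePreserving_neg (volume : Measure ℝ)).setLIntegral_comp_preimage_emb
    (MeasurableEquiv.neg ℝ).measurableEmbedding
    (fun r : ℝ => ‖fderiv ℝ w (x + r • v)‖ₑ) (Set.Ici 0)
  have e : (Neg.neg : ℝ → ℝ) ⁻¹' (Set.Ici 0) = Set.Iic 0 := by ext; simp
  rw [e] at hmp
  rw [hmp, setLIntegral_congr Ioi_ae_eq_Ici]

/-- The pointwise bound `ω_{n-1} |w| ≤ |∇w| * ‖·‖^{1-n}`: average the bound along rays over the
sphere and read the result in polar coordinates. -/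
lemma potential_estimate {n : ℕ} (hn : 2 ≤ n) {w : EuclideanSpace ℝ (Fin n) → ℝ}
    (hw : ContDiff ℝ 1 w) (hc : HasCompactSupport w) (x : EuclideanSpace ℝ (Fin n)) :
    ENNReal.ofReal (sphereArea n) * ‖w x‖ₑ ≤ ∫⁻ y, ‖fderiv ℝ w y‖ₑ * rieszKernel (x - y) := by
  have hm : Measurable (fun y => ‖fderiv ℝ w y‖ₑ) :=
    (hw.continuous_fderiv one_ne_zero).enorm.measurable
  have h1 : ∫⁻ y, ‖fderiv ℝ w y‖ₑ * rieszKernel (x - y) =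
      ∫⁻ z, ‖fderiv ℝ w (x + z)‖ₑ * rieszKernel z := by
    rw [← lintegral_add_left_eq_self _ x]
    refine lintegral_congr fun z => ?_
    simp [rieszKernel]
  rw [h1, lintegral_polar hn (f := fun z => ‖fderiv ℝ w (x + z)‖ₑ * rieszKernel z)
    ((hm.comp (measurable_const_add x)).mul measurable_rieszKernel)]
  calc ENNReal.ofReal (sphereArea n) * ‖w x‖ₑ
      = ∫⁻ _θ : Metric.sphere (0 : EuclideanSpace ℝ (Fin n)) 1, ‖w x‖ₑ
        ∂(volume : Measure (EuclideanSpace ℝ (Fin n))).toSphere := by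
        rw [lintegral_const, toSphere_univ hn, mul_comm]
    _ ≤ _ := by
        refine lintegral_mono fun θ => (enorm_le_lintegral_ray hw hc x θ).trans ?_
        refine (setLIntegral_congr_fun measurableSet_Ioi fun r hr => ?_).le
        have hr : 0 < r := hr
        simp only [rieszKernel, norm_smul, norm_eq_abs, abs_of_pos hr]
        have : ‖(θ : EuclideanSpace ℝ (Fin n))‖ = 1 := by simp
        rw [this, mul_one, mul_left_comm, ← ENNReal.ofReal_mul (by positivity),
          mul_inv_cancel₀ (by positivity)]
        simp

section Estimates

variable {n : ℕ}

local notation "E" => EuclideanSpace ℝ (Fin n)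

/-! ### The capacity estimate -/

/-- The cross term and the last term are linear in `b` up to factors `a^{q-1}`, `b^{q-1}`; this is what
keeps the coefficient of the leading term `a^q` equal to `1`. -/
lemma add_rpow_le_expansion {q : ℝ} (hq1 : 1 < q) (hq2 : q ≤ 2) (a b : ℝ≥0∞) :
    (a + b) ^ q ≤ a ^ q + 2 * (a ^ (q - 1) * b) + b ^ q := by
  have h1 : ∀ c : ℝ≥0∞, c ^ q = c ^ (q - 1) * c := by
    intro c
    have : c ^ ((q - 1) + 1) = c ^ (q - 1) * c ^ (1 : ℝ) :=
      ENNReal.rpow_add_of_nonneg _ _ (by linarith) (by norm_num)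
    simpa using this
  rcases eq_or_ne a ⊤ with rfl | ha
  · simp [ENNReal.top_rpow_of_pos (show 0 < q by linarith)]
  rcases eq_or_ne b ⊤ with rfl | hb
  · simp [ENNReal.top_rpow_of_pos (show 0 < q by linarith)]
  lift a to NNReal using ha
  lift b to NNReal using hb
  rcases eq_or_ne a 0 with rfl | ha0
  · simp
  have key : ((a + b : NNReal) : ℝ) ^ (q - 1) * a ≤ (a : ℝ) ^ (q - 1) * (a + b) := by
    have ha' : (0 : ℝ) < a := by positivity
    have hb' : (0 : ℝ) ≤ b := b.2
    have e : ((a + b : NNReal) : ℝ) = a * (1 + b / a) := by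
      push_cast; field_simp
    rw [e, Real.mul_rpow ha'.le (by positivity)]
    have h2 : (1 + (b : ℝ) / a) ^ (q - 1) ≤ 1 + (q - 1) * (b / a) :=
      rpow_one_add_le_one_add_mul_self (by have : (0 : ℝ) ≤ b / a := by positivity
                                           linarith) (by linarith) (by linarith)
    have h3 : (1 + (b : ℝ) / a) ^ (q - 1) ≤ 1 + b / a := by
      have : (0 : ℝ) ≤ b / a := by positivity
      nlinarith
    calc (a : ℝ) ^ (q - 1) * (1 + b / a) ^ (q - 1) * a
        ≤ (a : ℝ) ^ (q - 1) * (1 + b / a) * a := by gcongr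
      _ = _ := by field_simp
  have key' : ((a : ℝ≥0∞) + b) ^ (q - 1) * a ≤ (a : ℝ≥0∞) ^ (q - 1) * (a + b) := by
    rw [← ENNReal.coe_add, ← ENNReal.coe_rpow_of_nonneg _ (by linarith),
      ← ENNReal.coe_rpow_of_nonneg _ (by linarith), ← ENNReal.coe_mul, ← ENNReal.coe_mul]
    exact_mod_cast key
  have key2 : ((a : ℝ≥0∞) + b) ^ (q - 1) ≤ (a : ℝ≥0∞) ^ (q - 1) + (b : ℝ≥0∞) ^ (q - 1) :=
    ENNReal.rpow_add_le_add_rpow _ _ (by linarith) (by linarith)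
  calc ((a : ℝ≥0∞) + b) ^ q = ((a : ℝ≥0∞) + b) ^ (q - 1) * a + ((a : ℝ≥0∞) + b) ^ (q - 1) * b := by
        rw [h1, mul_add]
    _ ≤ (a : ℝ≥0∞) ^ (q - 1) * (a + b) + ((a : ℝ≥0∞) ^ (q - 1) + (b : ℝ≥0∞) ^ (q - 1)) * b := by
        gcongr
    _ = _ := by rw [h1 a, h1 b]; ring

/-- The part of the Riesz kernel inside the ball of radius `r`. -/
def nearKernel (r : ℝ) (z : E) : ℝ≥0∞ := if ‖z‖ < r then rieszKernel z else 0

/-- The part of the Riesz kernel in the annulus `r ≤ ‖z‖ < D`. -/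
def farKernel (r D : ℝ) (z : E) : ℝ≥0∞ :=
  if r ≤ ‖z‖ ∧ ‖z‖ < D then rieszKernel z else 0

lemma measurable_nearKernel (r : ℝ) : Measurable (nearKernel r : E → ℝ≥0∞) :=
  Measurable.ite (measurableSet_lt measurable_norm measurable_const) measurable_rieszKernel
    measurable_const

lemma measurable_farKernel (r D : ℝ) : Measurable (farKernel r D : E → ℝ≥0∞) :=
  Measurable.ite ((measurableSet_le measurable_const measurable_norm).inter
    (measurableSet_lt measurable_norm measurable_const)) measurable_rieszKernel
    measurable_const

lemma lintegral_nearKernel (hn : 2 ≤ n) (r : ℝ) :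
    ∫⁻ z : E, nearKernel r z = ENNReal.ofReal (sphereArea n) * ENNReal.ofReal r := by
  have h := lintegral_radial hn
    (f := fun ρ : ℝ => if ρ < r then ENNReal.ofReal ((ρ ^ (n - 1))⁻¹) else 0)
    (Measurable.ite measurableSet_Iio (by fun_prop) measurable_const)
  refine h.trans ?_
  congr 1
  have : ∀ ρ ∈ Set.Ioi (0 : ℝ), ENNReal.ofReal (ρ ^ (n - 1)) *
      (if ρ < r then ENNReal.ofReal ((ρ ^ (n - 1))⁻¹) else 0) =
      (Set.Iio r).indicator (fun _ => (1 : ℝ≥0∞)) ρ := by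
    intro ρ hρ
    have hρ : 0 < ρ := hρ
    by_cases hr : ρ < r
    · simp only [hr, if_true, Set.indicator, Set.mem_Iio]
      rw [← ENNReal.ofReal_mul (by positivity), mul_inv_cancel₀ (by positivity)]
      simp
    · simp [hr]
  rw [setLIntegral_congr_fun measurableSet_Ioi this, setLIntegral_indicator measurableSet_Iio]
  rw [lintegral_const, one_mul, Measure.restrict_apply_univ, Set.inter_comm, Set.Ioi_inter_Iio,
    Real.volume_Ioo, sub_zero]

/-- The kernel `‖z‖^{1-n}` is borderline for the exponent `n/(n-1)`, which produces the logarithm. -/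
lemma lintegral_farKernel_rpow (hn : 2 ≤ n) {r D : ℝ} (hr : 0 < r) (hrD : r ≤ D) :
    ∫⁻ z : E, farKernel r D z ^ ((n : ℝ) / (n - 1)) =
      ENNReal.ofReal (sphereArea n) * ENNReal.ofReal (Real.log (D / r)) := by
  have hn' : (2 : ℝ) ≤ n := by exact_mod_cast hn
  have hq : (0 : ℝ) < (n : ℝ) / (n - 1) := div_pos (by linarith) (by linarith)
  have h := lintegral_radial hn
    (f := fun ρ : ℝ => (if r ≤ ρ ∧ ρ < D then ENNReal.ofReal ((ρ ^ (n - 1))⁻¹) else 0) ^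
      ((n : ℝ) / (n - 1)))
    ((Measurable.ite measurableSet_Ico (by fun_prop) measurable_const).pow_const _)
  refine h.trans ?_
  congr 1
  have : ∀ ρ ∈ Set.Ioi (0 : ℝ), ENNReal.ofReal (ρ ^ (n - 1)) *
      (if r ≤ ρ ∧ ρ < D then ENNReal.ofReal ((ρ ^ (n - 1))⁻¹) else 0) ^ ((n : ℝ) / (n - 1)) =
      (Set.Ico r D).indicator (fun ρ => ENNReal.ofReal ρ⁻¹) ρ := by
    intro ρ hρ
    have hρ : 0 < ρ := hρ
    by_cases h : r ≤ ρ ∧ ρ < D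
    · simp only [h, if_true, Set.indicator, Set.mem_Ico, and_self]
      rw [ENNReal.ofReal_rpow_of_nonneg (by positivity) hq.le,
        ← ENNReal.ofReal_mul (by positivity)]
      congr 1
      rw [← Real.rpow_natCast, ← Real.rpow_neg hρ.le, ← Real.rpow_mul hρ.le,
        ← Real.rpow_add hρ, ← Real.rpow_neg_one]
      congr 1
      push_cast [Nat.cast_sub (show 1 ≤ n by lia)]
      have : (n : ℝ) - 1 ≠ 0 := by linarith
      field_simp
      ring
    · simp only [h, if_false, Set.indicator, Set.mem_Ico]
      rw [ENNReal.zero_rpow_of_pos hq, mul_zero]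
  rw [setLIntegral_congr_fun measurableSet_Ioi this, setLIntegral_indicator measurableSet_Ico]
  have e : Set.Ico r D ∩ Set.Ioi 0 = Set.Ico r D := by
    apply Set.inter_eq_left.2
    intro x hx
    exact lt_of_lt_of_le hr hx.1
  rw [e, setLIntegral_congr Ico_ae_eq_Ioc, ← integral_inv_of_pos hr (hr.trans_le hrD),
    intervalIntegral.integral_of_le hrD, ofReal_integral_eq_lintegral_ofReal]
  · refine (intervalIntegral.intervalIntegrable_inv (fun x hx => ?_) continuousOn_id).1
    rw [Set.uIcc_of_le hrD] at hx
    exact (hr.trans_le hx.1).ne'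
  · filter_upwards [ae_restrict_mem measurableSet_Ioc] with x hx
    exact inv_nonneg.2 (hr.le.trans hx.1.le)

lemma holderConjugate_dim (hn : 2 ≤ n) : (n : ℝ).HolderConjugate ((n : ℝ) / (n - 1)) := by
  have hn' : (2 : ℝ) ≤ n := by exact_mod_cast hn
  have := Real.HolderConjugate.conjExponent (p := (n : ℝ)) (by linarith)
  exact this

/-- Jensen's inequality for the average of `g` over `S`. -/
lemma setLIntegral_rpow_le {p q : ℝ} (hpq : p.HolderConjugate q) (S : Set E)
    {g : E → ℝ≥0∞} (hg : Measurable g) :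
    (∫⁻ x in S, g x) ^ q ≤ volume S ^ (q - 1) * ∫⁻ x in S, g x ^ q := by
  have h := ENNReal.lintegral_mul_le_Lp_mul_Lq (volume.restrict S) hpq
    (f := fun _ => 1) (g := g) aemeasurable_const hg.aemeasurable
  simp only [Pi.mul_apply, one_mul, ENNReal.one_rpow, lintegral_const, Measure.restrict_apply_univ]
    at h
  have h2 := ENNReal.rpow_le_rpow h hpq.symm.nonneg
  refine h2.trans (le_of_eq ?_)
  rw [ENNReal.mul_rpow_of_nonneg _ _ hpq.symm.nonneg, ← ENNReal.rpow_mul, ← ENNReal.rpow_mul,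
    one_div_mul_cancel hpq.symm.ne_zero, ENNReal.rpow_one]
  congr 2
  rw [one_div_mul_eq_div, hpq.symm.div_conj_eq_sub_one]

/-- The `L^{n/(n-1)}` norm of the Riesz potential of `S`, cut off at distance `D`, where
`|S| = r^n`. The far part carries the logarithm with its sharp coefficient; the near part, a bounded
function with small integral, contributes only to the additive constant. -/
lemma lintegral_near_far {r D : ℝ} (hn : 2 ≤ n) (hr : 0 < r) (hrD : r ≤ D) {S : Set E}
    (hvol : volume S = ENNReal.ofReal (r ^ n)) :
    ∫⁻ y : E, ((∫⁻ x in S, farKernel r D (x - y)) + ∫⁻ x in S, nearKernel r (x - y)) ^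
        ((n : ℝ) / (n - 1)) ≤
      ENNReal.ofReal (r ^ n) ^ ((n : ℝ) / (n - 1)) * ENNReal.ofReal (sphereArea n *
        (Real.log (D / r) + 2 + sphereArea n ^ (1 / ((n : ℝ) - 1)))) := by
  have hn' : (2 : ℝ) ≤ n := by exact_mod_cast hn
  have hpq := holderConjugate_dim hn
  set q : ℝ := (n : ℝ) / (n - 1) with hq
  have hn1 : (n : ℝ) - 1 ≠ 0 := by linarith
  have hq1 : q - 1 = 1 / ((n : ℝ) - 1) := by
    rw [hq]; field_simp; ring
  have hq2 : q ≤ 2 := by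
    rw [hq, div_le_iff₀ (by linarith)]; linarith
  have hq3 : 1 < q := hpq.symm.lt
  have hω := sphereArea_pos hn
  set ω := sphereArea n
  set N : E → ℝ≥0∞ := fun y => ∫⁻ x in S, nearKernel r (x - y) with hN
  set F : E → ℝ≥0∞ := fun y => ∫⁻ x in S, farKernel r D (x - y) with hF
  have mN2 : Measurable (fun p : E × E => nearKernel r (p.1 - p.2)) :=
    (measurable_nearKernel r).comp (measurable_fst.sub measurable_snd)
  have mF2 : Measurable (fun p : E × E => farKernel r D (p.1 - p.2)) :=
    (measurable_farKernel r D).comp (measurable_fst.sub measurable_snd)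
  have mN : Measurable N := mN2.lintegral_prod_left'
  have mF : Measurable F := mF2.lintegral_prod_left'
  have hN1 : ∀ y, N y ≤ ENNReal.ofReal (ω * r) := by
    intro y
    calc N y ≤ ∫⁻ x, nearKernel r (x - y) := setLIntegral_le_lintegral _ _
      _ = ∫⁻ x : E, nearKernel r x := lintegral_sub_right_eq_self _ y
      _ = _ := by rw [lintegral_nearKernel hn, ENNReal.ofReal_mul hω.le]
  have hN2 : ∫⁻ y, N y = ENNReal.ofReal (r ^ n * (ω * r)) := by
    rw [hN, lintegral_lintegral_swap (f := fun y x => nearKernel r (x - y))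
      (mN2.comp measurable_swap).aemeasurable]
    have : ∀ x : E, ∫⁻ y, nearKernel r (x - y) = ENNReal.ofReal (ω * r) := fun x => by
      rw [lintegral_sub_left_eq_self (fun z : E => nearKernel r z) x, lintegral_nearKernel hn,
        ENNReal.ofReal_mul hω.le]
    simp only [this, lintegral_const, Measure.restrict_apply_univ, hvol]
    rw [mul_comm, ← ENNReal.ofReal_mul (by positivity)]
  have hF1 : ∀ y, F y ≤ ENNReal.ofReal r := by
    intro y
    calc F y ≤ ∫⁻ _x in S, ENNReal.ofReal ((r ^ (n - 1))⁻¹) := by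
          refine lintegral_mono fun x => ?_
          unfold farKernel
          split_ifs with h
          · unfold rieszKernel
            have := h.1
            gcongr
          · exact zero_le
      _ = ENNReal.ofReal r := by
          rw [lintegral_const, Measure.restrict_apply_univ, hvol,
            ← ENNReal.ofReal_mul (by positivity)]
          congr 1
          rw [inv_mul_eq_div, div_eq_iff (by positivity), ← pow_succ']
          congr 1; lia
  have hF2 : ∫⁻ y, F y ^ q ≤ ENNReal.ofReal (r ^ n) ^ q * ENNReal.ofReal (ω * Real.log (D / r)) := by
    calc ∫⁻ y, F y ^ q
        ≤ ∫⁻ y, volume S ^ (q - 1) * ∫⁻ x in S, farKernel r D (x - y) ^ q :=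
          lintegral_mono fun y => setLIntegral_rpow_le hpq S
            ((measurable_farKernel r D).comp (measurable_sub_const y))
      _ = volume S ^ (q - 1) * ∫⁻ y, ∫⁻ x in S, farKernel r D (x - y) ^ q := by
          rw [lintegral_const_mul]
          exact (mF2.pow_const q).lintegral_prod_left'
      _ = volume S ^ (q - 1) * (volume S * ENNReal.ofReal (ω * Real.log (D / r))) := by
          rw [lintegral_lintegral_swap (f := fun y x => farKernel r D (x - y) ^ q)
            ((mF2.comp measurable_swap).pow_const q).aemeasurable]
          have : ∀ x : E, ∫⁻ y, farKernel r D (x - y) ^ q =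
              ENNReal.ofReal (ω * Real.log (D / r)) := fun x => by
            rw [lintegral_sub_left_eq_self (fun z : E => farKernel r D z ^ q) x,
              lintegral_farKernel_rpow hn hr hrD, ENNReal.ofReal_mul hω.le]
          simp only [this, lintegral_const, Measure.restrict_apply_univ]
          rw [mul_comm (volume S)]
      _ = _ := by
          rw [hvol, ← mul_assoc]
          congr 1
          have : ENNReal.ofReal (r ^ n) ^ ((q - 1) + 1) =
              ENNReal.ofReal (r ^ n) ^ (q - 1) * ENNReal.ofReal (r ^ n) ^ (1 : ℝ) :=
            ENNReal.rpow_add_of_nonneg _ _ (by linarith) (by norm_num)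
          rw [ENNReal.rpow_one] at this
          rw [← this]; congr 1; ring
  have hlog : 0 ≤ Real.log (D / r) := Real.log_nonneg (by rw [le_div_iff₀ hr]; linarith)
  -- all three terms below scale like `(r ^ n) ^ q`, since `n (q - 1) = q`
  have hrq : r ^ (q - 1) * (r ^ n * r) = (r ^ n) ^ q := by
    rw [← Real.rpow_natCast, ← Real.rpow_mul hr.le]
    nth_rewrite 3 [← Real.rpow_one r]
    rw [← Real.rpow_add hr, ← Real.rpow_add hr]
    congr 1
    rw [hq]; field_simp; ring
  calc ∫⁻ y, (F y + N y) ^ q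
      ≤ ∫⁻ y, (F y ^ q + 2 * (ENNReal.ofReal r ^ (q - 1) * N y) +
          ENNReal.ofReal (ω * r) ^ (q - 1) * N y) := by
        refine lintegral_mono fun y => (add_rpow_le_expansion hq3 hq2 _ _).trans ?_
        have e : N y ^ q = N y ^ (q - 1) * N y := by
          have : N y ^ ((q - 1) + 1) = N y ^ (q - 1) * N y ^ (1 : ℝ) :=
            ENNReal.rpow_add_of_nonneg _ _ (by linarith) (by norm_num)
          simpa using this
        rw [e]
        have : 0 ≤ q - 1 := by linarith
        gcongr
        · exact hF1 y
        · exact hN1 y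
    _ = (∫⁻ y, F y ^ q) + 2 * (ENNReal.ofReal r ^ (q - 1) * ∫⁻ y, N y) +
          ENNReal.ofReal (ω * r) ^ (q - 1) * ∫⁻ y, N y := by
        rw [lintegral_add_right _ (mN.const_mul _),
          lintegral_add_right _ ((mN.const_mul _).const_mul _), lintegral_const_mul _ mN,
          lintegral_const_mul _ (mN.const_mul _), lintegral_const_mul _ mN]
    _ ≤ ENNReal.ofReal (r ^ n) ^ q * ENNReal.ofReal (ω * Real.log (D / r)) +
        ENNReal.ofReal 2 * (ENNReal.ofReal r ^ (q - 1) * ENNReal.ofReal (r ^ n * (ω * r))) +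
        ENNReal.ofReal (ω * r) ^ (q - 1) * ENNReal.ofReal (r ^ n * (ω * r)) := by
        rw [hN2, show ENNReal.ofReal 2 = 2 by simp]
        gcongr
    _ = ENNReal.ofReal (r ^ n) ^ q * ENNReal.ofReal (ω *
        (Real.log (D / r) + 2 + ω ^ (1 / ((n : ℝ) - 1)))) := by
        have h0 : 0 ≤ q - 1 := by linarith
        have h1 : 0 ≤ q := by linarith
        rw [← hq1, ENNReal.ofReal_rpow_of_nonneg (by positivity) h1,
          ENNReal.ofReal_rpow_of_nonneg hr.le h0,
          ENNReal.ofReal_rpow_of_nonneg (by positivity) h0]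
        rw [← ENNReal.ofReal_mul (by positivity), ← ENNReal.ofReal_mul (by positivity),
          ← ENNReal.ofReal_mul (by positivity), ← ENNReal.ofReal_mul (by positivity),
          ← ENNReal.ofReal_mul (by positivity), ← ENNReal.ofReal_add (by positivity) (by positivity),
          ← ENNReal.ofReal_add (by positivity) (by positivity)]
        congr 1
        rw [Real.mul_rpow hω.le hr.le]
        linear_combination (2 * ω + ω ^ (q - 1) * ω) * hrq

/-- Sharp capacity estimate: a function of `n`-energy `A` that is at least `M` in absolute value on
a set `S` of volume `r ^ n` satisfies `α_n M^{n/(n-1)} ≤ A^{1/(n-1)} (log (D^n/|S|) + const)`. -/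
lemma capacity_estimate {r D R : ℝ} (hn : 2 ≤ n) (hr : 0 < r) (hrD : r ≤ D) (hRD : 2 * R ≤ D)
    {S : Set E} (hS : MeasurableSet S) (hvol : volume S = ENNReal.ofReal (r ^ n))
    (hSR : S ⊆ Metric.ball 0 R) {w : E → ℝ} (hw : ContDiff ℝ 1 w) (hc : HasCompactSupport w)
    (hwR : tsupport w ⊆ Metric.ball 0 R) {M : ℝ} (hM : 0 ≤ M) (hMw : ∀ x ∈ S, M ≤ |w x|) :
    ENNReal.ofReal (M ^ n * moserConst n ^ (n - 1)) ≤ (∫⁻ x, ‖fderiv ℝ w x‖ₑ ^ (n : ℝ)) *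
      ENNReal.ofReal ((n * Real.log (D / r) + 2 * n + moserConst n) ^ (n - 1)) := by
  have hn' : (2 : ℝ) ≤ n := by exact_mod_cast hn
  have hpq := holderConjugate_dim hn
  have hω := sphereArea_pos hn
  have hlog : 0 ≤ Real.log (D / r) := Real.log_nonneg (by rw [le_div_iff₀ hr]; linarith)
  have mf : Measurable (fun y => ‖fderiv ℝ w y‖ₑ) :=
    (hw.continuous_fderiv one_ne_zero).enorm.measurable
  set T : ℝ := sphereArea n * (Real.log (D / r) + 2 + sphereArea n ^ (1 / ((n : ℝ) - 1))) with hT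
  have hT0 : 0 ≤ T := by positivity
  set G : E → ℝ≥0∞ := fun y => (∫⁻ x in S, farKernel r D (x - y)) +
    ∫⁻ x in S, nearKernel r (x - y) with hG
  have mN2 : Measurable (fun p : E × E => nearKernel r (p.1 - p.2)) :=
    (measurable_nearKernel r).comp (measurable_fst.sub measurable_snd)
  have mF2 : Measurable (fun p : E × E => farKernel r D (p.1 - p.2)) :=
    (measurable_farKernel r D).comp (measurable_fst.sub measurable_snd)
  have mG : Measurable G := mF2.lintegral_prod_left'.add mN2.lintegral_prod_left'
  set A : ℝ≥0∞ := ∫⁻ x, ‖fderiv ℝ w x‖ₑ ^ (n : ℝ) with hA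
  have h1 : ENNReal.ofReal (sphereArea n * M) * ENNReal.ofReal (r ^ n) ≤
      ∫⁻ y, ‖fderiv ℝ w y‖ₑ * G y := by
    calc ENNReal.ofReal (sphereArea n * M) * ENNReal.ofReal (r ^ n)
        = ∫⁻ _x in S, ENNReal.ofReal (sphereArea n * M) := by
          rw [lintegral_const, Measure.restrict_apply_univ, hvol]
      _ ≤ ∫⁻ x in S, ∫⁻ y, ‖fderiv ℝ w y‖ₑ * rieszKernel (x - y) := by
          refine setLIntegral_mono' hS fun x hx => ?_
          refine le_trans ?_ (potential_estimate hn hw hc x)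
          rw [ENNReal.ofReal_mul hω.le]
          gcongr
          rw [← ofReal_norm]
          exact ENNReal.ofReal_le_ofReal (hMw x hx)
      _ = ∫⁻ y, ∫⁻ x in S, ‖fderiv ℝ w y‖ₑ * rieszKernel (x - y) := by
          apply lintegral_lintegral_swap
          exact ((mf.comp measurable_snd).mul
            (measurable_rieszKernel.comp (measurable_fst.sub measurable_snd))).aemeasurable
      _ ≤ ∫⁻ y, ‖fderiv ℝ w y‖ₑ * G y := by
          refine lintegral_mono fun y => ?_
          by_cases hy : y ∈ tsupport w
          · have hyR := mem_ball_zero_iff.1 (hwR hy)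
            rw [lintegral_const_mul (‖fderiv ℝ w y‖ₑ) (f := fun x => rieszKernel (x - y))
              (measurable_rieszKernel.comp (measurable_sub_const y))]
            gcongr
            change _ ≤ (∫⁻ x in S, farKernel r D (x - y)) + ∫⁻ x in S, nearKernel r (x - y)
            rw [← lintegral_add_left (f := fun x => farKernel r D (x - y))
              ((measurable_farKernel r D).comp (measurable_sub_const y))]
            refine setLIntegral_mono' hS fun x hx => ?_
            have hxR := mem_ball_zero_iff.1 (hSR hx)
            have hxy : ‖x - y‖ < D := by
              have := norm_sub_le x y
              linarith
            unfold farKernel nearKernel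
            by_cases h : ‖x - y‖ < r
            · simp [h]
            · simp [not_lt.1 h, hxy]
          · have : fderiv ℝ w y = 0 :=
              image_eq_zero_of_notMem_tsupport (fun h => hy (tsupport_fderiv_subset ℝ h))
            have h0 : ‖fderiv ℝ w y‖ₑ = 0 := by
              rw [← ofReal_norm, this, norm_zero, ENNReal.ofReal_zero]
            simp [h0]
  have h2 : ENNReal.ofReal (sphereArea n * M) * ENNReal.ofReal (r ^ n) ≤
      A ^ (1 / (n : ℝ)) * (ENNReal.ofReal (r ^ n) *
        ENNReal.ofReal T ^ (1 / ((n : ℝ) / (n - 1)))) := by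
    refine h1.trans ((ENNReal.lintegral_mul_le_Lp_mul_Lq volume hpq
      mf.aemeasurable mG.aemeasurable).trans ?_)
    gcongr
    have h3 := ENNReal.rpow_le_rpow (lintegral_near_far hn hr hrD hvol)
      (z := 1 / ((n : ℝ) / (n - 1))) (one_div_nonneg.2 hpq.symm.nonneg)
    refine h3.trans (le_of_eq ?_)
    rw [ENNReal.mul_rpow_of_nonneg _ _ (one_div_nonneg.2 hpq.symm.nonneg), ← ENNReal.rpow_mul,
      mul_one_div_cancel hpq.symm.ne_zero, ENNReal.rpow_one]
  have hrn : ENNReal.ofReal (r ^ n) ≠ 0 := by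
    simp only [ne_eq, ENNReal.ofReal_eq_zero, not_le]; positivity
  have h3 : ENNReal.ofReal (sphereArea n * M) ≤
      A ^ (1 / (n : ℝ)) * ENNReal.ofReal T ^ (1 / ((n : ℝ) / (n - 1))) := by
    rw [mul_left_comm, mul_comm] at h2
    exact (ENNReal.mul_le_mul_iff_right hrn ENNReal.ofReal_ne_top).1 h2
  have h4 := ENNReal.rpow_le_rpow h3 (z := n) (by positivity)
  rw [ENNReal.mul_rpow_of_nonneg _ _ (by positivity), ← ENNReal.rpow_mul, ← ENNReal.rpow_mul,
    one_div_mul_cancel (by positivity), ENNReal.rpow_one,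
    show 1 / ((n : ℝ) / (n - 1)) * n = ((n - 1 : ℕ) : ℝ) by
      push_cast [Nat.cast_sub (show 1 ≤ n by lia)]
      have : (n : ℝ) - 1 ≠ 0 := by linarith
      field_simp, ENNReal.rpow_natCast, ENNReal.rpow_natCast,
    ← ENNReal.ofReal_pow (by positivity), ← ENNReal.ofReal_pow hT0] at h4
  -- multiplying `h4` by `n ^ (n-1) / ω ^ (n-1)` turns `ω`, `T` into `α_n` and the logarithm
  have hα : moserConst n ^ (n - 1) = n ^ (n - 1) * sphereArea n := by
    unfold moserConst
    rw [mul_pow, ← Real.rpow_natCast (sphereArea n ^ _), ← Real.rpow_mul hω.le]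
    push_cast [Nat.cast_sub (show 1 ≤ n by lia)]
    have : (n : ℝ) - 1 ≠ 0 := by linarith
    rw [one_div_mul_cancel this, Real.rpow_one]
  have hS' : n * Real.log (D / r) + 2 * n + moserConst n = n * T / sphereArea n := by
    rw [hT]; unfold moserConst; field_simp
  have hfac : 0 ≤ (n : ℝ) ^ (n - 1) / sphereArea n ^ (n - 1) := by positivity
  calc ENNReal.ofReal (M ^ n * moserConst n ^ (n - 1))
      = ENNReal.ofReal ((n : ℝ) ^ (n - 1) / sphereArea n ^ (n - 1)) *
          ENNReal.ofReal ((sphereArea n * M) ^ n) := by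
        rw [← ENNReal.ofReal_mul hfac, hα]
        congr 1
        have : sphereArea n ^ n = sphereArea n ^ (n - 1) * sphereArea n := by
          rw [← pow_succ]; congr 1; lia
        rw [mul_pow, this]
        field_simp
    _ ≤ ENNReal.ofReal ((n : ℝ) ^ (n - 1) / sphereArea n ^ (n - 1)) *
          (A * ENNReal.ofReal (T ^ (n - 1))) := by gcongr
    _ = _ := by
        rw [mul_left_comm, ← ENNReal.ofReal_mul hfac, hS', div_pow, mul_pow (n : ℝ) T]
        congr 2
        field_simp

/-! ### Truncation and change of slope -/

/-- The capacity estimate applied to `Φ ∘ u`, where `Φ` is the odd primitive of a nonnegative even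
function `φ`. -/
lemma truncation_estimate {r D R t : ℝ} (hn : 2 ≤ n) (hr : 0 < r) (hrD : r ≤ D) (hRD : 2 * R ≤ D)
    {u : E → ℝ} (hu : ContDiff ℝ 1 u) (hc : HasCompactSupport u)
    (huR : tsupport u ⊆ Metric.ball 0 R) (ht : 0 < t)
    (hvol : volume {x | t ≤ |u x|} = ENNReal.ofReal (r ^ n))
    {φ : ℝ → ℝ} (hφ : Continuous φ) (hφ0 : ∀ s, 0 ≤ φ s) (heven : ∀ s, φ (-s) = φ s) :
    ENNReal.ofReal ((∫ s in (0 : ℝ)..t, φ s) ^ n * moserConst n ^ (n - 1)) ≤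
      (∫⁻ x, ENNReal.ofReal (φ (u x)) ^ (n : ℝ) * ‖fderiv ℝ u x‖ₑ ^ (n : ℝ)) *
      ENNReal.ofReal ((n * Real.log (D / r) + 2 * n + moserConst n) ^ (n - 1)) := by
  set Φ : ℝ → ℝ := fun s => ∫ y in (0 : ℝ)..s, φ y with hΦ
  have hd : ∀ s, HasDerivAt Φ (φ s) s := fun s => hφ.integral_hasStrictDerivAt 0 s |>.hasDerivAt
  have hΦ1 : ContDiff ℝ 1 Φ := by
    rw [contDiff_one_iff_deriv]
    refine ⟨fun s => (hd s).differentiableAt, ?_⟩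
    have : deriv Φ = φ := funext fun s => (hd s).deriv
    rwa [this]
  have hΦ0 : Φ 0 = 0 := by simp [hΦ]
  have hodd : ∀ s, Φ (-s) = -Φ s := by
    intro s
    have := intervalIntegral.integral_comp_neg (a := 0) (b := s) φ
    simp only [heven, neg_zero] at this
    simp only [hΦ]
    rw [this, intervalIntegral.integral_symm]
  have hmono : Monotone Φ := by
    intro a b hab
    have h1 := intervalIntegral.integral_add_adjacent_intervals
      (hφ.intervalIntegrable (μ := volume) 0 a) (hφ.intervalIntegrable a b)
    have h2 : 0 ≤ ∫ y in a..b, φ y := intervalIntegral.integral_nonneg hab fun y _ => hφ0 y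
    simp only [hΦ]; linarith
  have hw : ContDiff ℝ 1 (Φ ∘ u) := hΦ1.comp hu
  have hts : tsupport (Φ ∘ u) ⊆ tsupport u := closure_mono fun x hx => by
    simp only [Function.mem_support, Function.comp_apply] at hx ⊢
    intro h; rw [h] at hx; exact hx hΦ0
  have hM : 0 ≤ Φ t := by rw [← hΦ0]; exact hmono ht.le
  have hSsub : {x | t ≤ |u x|} ⊆ tsupport u := fun x hx => subset_tsupport u (by
    simp only [Set.mem_ofPred_eq] at hx
    intro h; rw [h, abs_zero] at hx; linarith)
  have h := capacity_estimate hn hr hrD hRD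
    (measurableSet_le measurable_const hu.continuous.abs.measurable) hvol
    (hSsub.trans huR) hw (hc.comp_left hΦ0) (hts.trans huR) hM (fun x hx => by
      simp only [Set.mem_ofPred_eq] at hx
      simp only [Function.comp_apply]
      rcases le_abs.1 hx with h | h
      · exact (hmono h).trans (le_abs_self _)
      · exact ((hmono h).trans (hodd _).le).trans (neg_le_abs _))
  refine h.trans (le_of_eq ?_)
  congr 1
  refine lintegral_congr fun x => ?_
  have : fderiv ℝ (Φ ∘ u) x = φ (u x) • fderiv ℝ u x :=
    ((hd (u x)).comp_hasFDerivAt x (hu.differentiable one_ne_zero x).hasFDerivAt).fderiv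
  rw [this, ← ENNReal.mul_rpow_of_nonneg _ _ (by positivity), ← ofReal_norm, norm_smul,
    ENNReal.ofReal_mul (norm_nonneg _), ofReal_norm (fderiv ℝ u x), Real.norm_of_nonneg (hφ0 _)]

/-- Truncating `u` above the level `t`: only the energy below the level `t` is needed to reach it. It
is obtained from `truncation_estimate` with continuous approximations `φ` of the indicator of
`[-t, t]`. -/
lemma lower_level_estimate {r D R t : ℝ} (hn : 2 ≤ n) (hr : 0 < r) (hrD : r ≤ D)
    (hRD : 2 * R ≤ D)
    {u : E → ℝ} (hu : ContDiff ℝ 1 u) (hc : HasCompactSupport u)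
    (huR : tsupport u ⊆ Metric.ball 0 R) (ht : 0 < t)
    (hvol : volume {x | t ≤ |u x|} = ENNReal.ofReal (r ^ n)) :
    ENNReal.ofReal (t ^ n * moserConst n ^ (n - 1)) ≤
      (∫⁻ x in {x | |u x| ≤ t}, ‖fderiv ℝ u x‖ₑ ^ (n : ℝ)) *
      ENNReal.ofReal ((n * Real.log (D / r) + 2 * n + moserConst n) ^ (n - 1)) := by
  have hα : 0 ≤ moserConst n := by
    unfold moserConst; have := sphereArea_pos hn; positivity
  have hS : MeasurableSet {x | |u x| ≤ t} :=
    measurableSet_le hu.continuous.abs.measurable measurable_const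
  have key : ∀ ε ∈ Set.Ioo 0 t, ENNReal.ofReal ((t - ε) ^ n * moserConst n ^ (n - 1)) ≤
      (∫⁻ x in {x | |u x| ≤ t}, ‖fderiv ℝ u x‖ₑ ^ (n : ℝ)) *
      ENNReal.ofReal ((n * Real.log (D / r) + 2 * n + moserConst n) ^ (n - 1)) := by
    intro ε ⟨hε, hεt⟩
    set φ : ℝ → ℝ := fun s => min 1 (max 0 ((t - |s|) / ε)) with hφdef
    have hφ : Continuous φ := by fun_prop
    have hφ0 : ∀ s, 0 ≤ φ s := fun s => le_min zero_le_one (le_max_left _ _)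
    have h := truncation_estimate hn hr hrD hRD hu hc huR ht hvol hφ hφ0
      (fun s => by simp [hφdef])
    have hint : t - ε ≤ ∫ s in (0 : ℝ)..t, φ s := by
      have h1 := intervalIntegral.integral_add_adjacent_intervals
        (hφ.intervalIntegrable (μ := volume) 0 (t - ε)) (hφ.intervalIntegrable (t - ε) t)
      have h2 : 0 ≤ ∫ y in (t - ε)..t, φ y :=
        intervalIntegral.integral_nonneg (by linarith) fun y _ => hφ0 y
      have h3 : ∫ s in (0 : ℝ)..(t - ε), (1 : ℝ) ≤ ∫ s in (0 : ℝ)..(t - ε), φ s := by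
        refine intervalIntegral.integral_mono_on (by linarith) (by simp)
          (hφ.intervalIntegrable _ _) fun s hs => ?_
        refine le_min le_rfl (le_max_of_le_right ?_)
        rw [abs_of_nonneg hs.1, le_div_iff₀ hε]
        linarith [hs.2]
      simp only [intervalIntegral.integral_const, sub_zero, smul_eq_mul, mul_one] at h3
      linarith
    refine le_trans (ENNReal.ofReal_le_ofReal ?_) (h.trans ?_)
    · have : 0 ≤ t - ε := by linarith
      gcongr
    · refine mul_le_mul' ?_ le_rfl
      rw [← lintegral_indicator hS]
      refine lintegral_mono fun x => ?_
      by_cases hx : |u x| ≤ t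
      · simp only [Set.indicator, Set.mem_ofPred_eq, hx, if_true]
        have : ENNReal.ofReal (φ (u x)) ^ (n : ℝ) ≤ 1 := by
          refine ENNReal.rpow_le_one ?_ (by positivity)
          rw [ENNReal.ofReal_le_one]
          exact min_le_left _ _
        exact mul_le_of_le_one_left' this
      · have h0 : φ (u x) = 0 := by
          have : (t - |u x|) / ε ≤ 0 := div_nonpos_of_nonpos_of_nonneg (by linarith) hε.le
          simp [hφdef, max_eq_left this]
        rw [h0, ENNReal.ofReal_zero, ENNReal.zero_rpow_of_pos (by positivity), zero_mul]
        exact zero_le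
  have hlim : Filter.Tendsto (fun ε : ℝ => ENNReal.ofReal ((t - ε) ^ n * moserConst n ^ (n - 1)))
      (𝓝[>] 0) (𝓝 (ENNReal.ofReal (t ^ n * moserConst n ^ (n - 1)))) := by
    have : Continuous (fun ε : ℝ => ENNReal.ofReal ((t - ε) ^ n * moserConst n ^ (n - 1))) := by
      exact ENNReal.continuous_ofReal.comp (by fun_prop)
    simpa using (this.tendsto 0).mono_left nhdsWithin_le_nhds
  refine le_of_tendsto hlim ?_
  filter_upwards [Ioo_mem_nhdsGT ht] with ε hε using key ε hε

/-- Doubling the slope of `u` above the level `t₁`: the composed function reaches `2 t₂ - t₁` where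
`|u| ≥ t₂`, and only the energy above `t₁` is multiplied, by `2 ^ n`. The `φ` in
`truncation_estimate` approximates `1` below `t₁` and `2` above. -/
lemma upper_level_estimate {r D R t₁ t₂ : ℝ} (hn : 2 ≤ n) (hr : 0 < r) (hrD : r ≤ D)
    (hRD : 2 * R ≤ D)
    {u : E → ℝ} (hu : ContDiff ℝ 1 u) (hc : HasCompactSupport u)
    (huR : tsupport u ⊆ Metric.ball 0 R) (ht₁ : 0 < t₁) (ht₂ : t₁ < t₂)
    (hvol : volume {x | t₂ ≤ |u x|} = ENNReal.ofReal (r ^ n)) :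
    ENNReal.ofReal ((2 * t₂ - t₁) ^ n * moserConst n ^ (n - 1)) ≤
      ((∫⁻ x in {x | |u x| ≤ t₁}, ‖fderiv ℝ u x‖ₑ ^ (n : ℝ)) +
        2 ^ n * ∫⁻ x in {x | |u x| ≤ t₁}ᶜ, ‖fderiv ℝ u x‖ₑ ^ (n : ℝ)) *
      ENNReal.ofReal ((n * Real.log (D / r) + 2 * n + moserConst n) ^ (n - 1)) := by
  have hα : 0 ≤ moserConst n := by
    unfold moserConst; have := sphereArea_pos hn; positivity
  have hS : MeasurableSet {x | |u x| ≤ t₁} :=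
    measurableSet_le hu.continuous.abs.measurable measurable_const
  have mf : Measurable (fun x => ‖fderiv ℝ u x‖ₑ ^ (n : ℝ)) :=
    (hu.continuous_fderiv one_ne_zero).enorm.measurable.pow_const _
  have key : ∀ ε ∈ Set.Ioo 0 (t₂ - t₁),
      ENNReal.ofReal ((2 * t₂ - t₁ - ε) ^ n * moserConst n ^ (n - 1)) ≤
      ((∫⁻ x in {x | |u x| ≤ t₁}, ‖fderiv ℝ u x‖ₑ ^ (n : ℝ)) +
        2 ^ n * ∫⁻ x in {x | |u x| ≤ t₁}ᶜ, ‖fderiv ℝ u x‖ₑ ^ (n : ℝ)) *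
      ENNReal.ofReal ((n * Real.log (D / r) + 2 * n + moserConst n) ^ (n - 1)) := by
    intro ε ⟨hε, hεt⟩
    set φ : ℝ → ℝ := fun s => 1 + min 1 (max 0 ((|s| - t₁) / ε)) with hφdef
    have hφ : Continuous φ := by fun_prop
    have hφ1 : ∀ s, 1 ≤ φ s := fun s => le_add_of_nonneg_right
      (le_min zero_le_one (le_max_left _ _))
    have hφ0 : ∀ s, 0 ≤ φ s := fun s => zero_le_one.trans (hφ1 s)
    have h := truncation_estimate hn hr hrD hRD hu hc huR (ht₁.trans ht₂) hvol hφ hφ0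
      (fun s => by simp [hφdef])
    have hint : 2 * t₂ - t₁ - ε ≤ ∫ s in (0 : ℝ)..t₂, φ s := by
      have h1 := intervalIntegral.integral_add_adjacent_intervals
        (hφ.intervalIntegrable (μ := volume) 0 (t₁ + ε)) (hφ.intervalIntegrable (t₁ + ε) t₂)
      have h2 : ∫ s in (0 : ℝ)..(t₁ + ε), (1 : ℝ) ≤ ∫ s in (0 : ℝ)..(t₁ + ε), φ s :=
        intervalIntegral.integral_mono_on (by linarith) (by simp)
          (hφ.intervalIntegrable _ _) fun s hs => hφ1 s
      have h3 : ∫ s in (t₁ + ε)..t₂, (2 : ℝ) ≤ ∫ s in (t₁ + ε)..t₂, φ s := by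
        refine intervalIntegral.integral_mono_on (by linarith) (by simp)
          (hφ.intervalIntegrable _ _) fun s hs => ?_
        have : 1 ≤ min 1 (max 0 ((|s| - t₁) / ε)) := by
          refine le_min le_rfl (le_max_of_le_right ?_)
          rw [le_div_iff₀ hε]
          linarith [hs.1, le_abs_self s]
        simp only [hφdef]; linarith
      simp only [intervalIntegral.integral_const, sub_zero, smul_eq_mul, mul_one] at h2 h3
      linarith
    refine le_trans (ENNReal.ofReal_le_ofReal ?_) (h.trans ?_)
    · have : 0 ≤ 2 * t₂ - t₁ - ε := by linarith
      gcongr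
    · gcongr
      rw [← lintegral_add_compl _ hS, ← lintegral_const_mul _ mf]
      gcongr ?_ + ?_
      · refine setLIntegral_mono' hS fun x hx => ?_
        have hx : |u x| ≤ t₁ := hx
        have h0 : φ (u x) = 1 := by
          have : (|u x| - t₁) / ε ≤ 0 := div_nonpos_of_nonpos_of_nonneg (by linarith) hε.le
          simp [hφdef, max_eq_left this]
        rw [h0, ENNReal.ofReal_one, ENNReal.one_rpow, one_mul]
      · refine lintegral_mono fun x => ?_
        gcongr
        rw [ENNReal.rpow_natCast]
        gcongr
        rw [show (2 : ℝ≥0∞) = ENNReal.ofReal 2 by simp]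
        apply ENNReal.ofReal_le_ofReal
        have : min 1 (max 0 ((|u x| - t₁) / ε)) ≤ 1 := min_le_left _ _
        simp only [hφdef]; linarith
  have hlim : Filter.Tendsto
      (fun ε : ℝ => ENNReal.ofReal ((2 * t₂ - t₁ - ε) ^ n * moserConst n ^ (n - 1)))
      (𝓝[>] 0) (𝓝 (ENNReal.ofReal ((2 * t₂ - t₁) ^ n * moserConst n ^ (n - 1)))) := by
    have : Continuous
        (fun ε : ℝ => ENNReal.ofReal ((2 * t₂ - t₁ - ε) ^ n * moserConst n ^ (n - 1))) := by
      exact ENNReal.continuous_ofReal.comp (by fun_prop)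
    simpa using (this.tendsto 0).mono_left nhdsWithin_le_nhds
  refine le_of_tendsto hlim ?_
  filter_upwards [Ioo_mem_nhdsGT (sub_pos.2 ht₂)] with ε hε using key ε hε

/-! ### One-dimensional estimates -/

/-- The numerical form of the gap between nearly optimal levels. Here `a`, `b` are the energies below
and above the level `t₁`. Near-optimality at `t₁` leaves little energy `b`; doubling the slope above
`t₁` is then almost free, and near-optimality at `t₂` forces `t₂` to be close to `t₁`. -/
lemma level_gap {n : ℕ} (hn : 2 ≤ n) {α a b t₁ t₂ S₁ S₂ l : ℝ} (hα : 0 < α) (hb : 0 ≤ b)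
    (hab : a + b ≤ 1) (ht₁ : 0 < t₁) (ht₂ : t₁ < t₂) (hl : 0 < l) (hS₁ : 0 ≤ S₁) (hS₂ : 0 ≤ S₂)
    (h₁ : S₁ ≤ α * t₁ ^ ((n : ℝ) / (n - 1)) + l) (h₂ : S₂ ≤ α * t₂ ^ ((n : ℝ) / (n - 1)) + l)
    (hlarge : 2 ^ (n + 1) * l ≤ α * t₁ ^ ((n : ℝ) / (n - 1)))
    (hlow : t₁ ^ n * α ^ (n - 1) ≤ a * S₁ ^ (n - 1))
    (hup : (2 * t₂ - t₁) ^ n * α ^ (n - 1) ≤ (a + 2 ^ n * b) * S₂ ^ (n - 1)) :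
    α * t₂ ^ ((n : ℝ) / (n - 1)) - α * t₁ ^ ((n : ℝ) / (n - 1)) ≤ (2 + 2 ^ (n + 2)) * l := by
  obtain ⟨p, rfl⟩ : ∃ p, n = p + 1 := ⟨n - 1, by lia⟩
  have hp : 0 < p := by lia
  have hp' : (0 : ℝ) < p := by exact_mod_cast hp
  rw [show ((p + 1 : ℕ) : ℝ) / (((p + 1 : ℕ) : ℝ) - 1) = (p + 1) / p by push_cast; ring_nf] at *
  simp only [Nat.add_sub_cancel] at *
  set q : ℝ := (p + 1) / p with hq
  have hq1 : 1 ≤ q := by rw [hq, le_div_iff₀ hp']; linarith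
  have hpow : ∀ t : ℝ, 0 < t → (α * t ^ q) ^ p = t ^ (p + 1) * α ^ p := by
    intro t ht
    rw [mul_pow, ← Real.rpow_natCast (t ^ q), ← Real.rpow_mul ht.le, hq,
      div_mul_cancel₀ _ hp'.ne', mul_comm]
    congr 1
    exact_mod_cast Real.rpow_natCast t (p + 1)
  have ht₂0 := ht₁.trans ht₂
  have ht₃ : 0 < 2 * t₂ - t₁ := by linarith
  rw [← hpow _ ht₁] at hlow
  rw [← hpow _ ht₃] at hup
  have hconv : 2 * (α * t₂ ^ q) - α * t₁ ^ q ≤ α * (2 * t₂ - t₁) ^ q := by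
    have := (convexOn_rpow hq1).2 (Set.mem_Ici.2 ht₃.le) (Set.mem_Ici.2 ht₁.le)
      (show (0 : ℝ) ≤ 1 / 2 by norm_num) (show (0 : ℝ) ≤ 1 / 2 by norm_num) (by norm_num)
    simp only [smul_eq_mul] at this
    rw [show 1 / 2 * (2 * t₂ - t₁) + 1 / 2 * t₁ = t₂ by ring] at this
    nlinarith
  have hτ₁0 : 0 < α * t₁ ^ q := by positivity
  have hτ₂0 : 0 < α * t₂ ^ q := by positivity
  have hw0 : 0 < α * (2 * t₂ - t₁) ^ q := by positivity
  generalize α * t₁ ^ q = τ₁ at *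
  generalize α * t₂ ^ q = τ₂ at *
  generalize α * (2 * t₂ - t₁) ^ q = w at *
  have ha : 0 ≤ a := by
    by_contra! h
    have : a * S₁ ^ p ≤ 0 := mul_nonpos_of_nonpos_of_nonneg h.le (by positivity)
    have : 0 < τ₁ ^ p := by positivity
    linarith
  -- Bernoulli's inequality bounds the energy above the level `t₁`
  have hb' : b ≤ p * (l / τ₁) := by
    have h3 : τ₁ ^ p ≤ a * (τ₁ + l) ^ p := hlow.trans (by gcongr)
    have h4 : 1 + (p : ℝ) * (-(l / (τ₁ + l))) ≤ (1 + -(l / (τ₁ + l))) ^ p := by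
      refine one_add_mul_le_pow ?_ p
      have : l / (τ₁ + l) ≤ 1 := by rw [div_le_one (by positivity)]; linarith
      linarith
    have h5 : 1 + -(l / (τ₁ + l)) = τ₁ / (τ₁ + l) := by field_simp; ring
    rw [h5, div_pow] at h4
    have h6 : τ₁ ^ p / (τ₁ + l) ^ p ≤ a := by rw [div_le_iff₀ (by positivity)]; exact h3
    have h7 : l / (τ₁ + l) ≤ l / τ₁ := by gcongr; linarith
    nlinarith
  set ρ := l / τ₁ with hρ
  have hρ0 : 0 ≤ ρ := by positivity
  have hρτ : ρ * τ₁ = l := by rw [hρ]; field_simp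
  have hw : w ≤ (1 + 2 ^ (p + 1) * ρ) * (τ₂ + l) := by
    refine le_of_pow_le_pow_left₀ hp.ne' (by positivity) (hup.trans ?_)
    rw [mul_pow]
    have h3 : 1 + (p : ℝ) * (2 ^ (p + 1) * ρ) ≤ (1 + 2 ^ (p + 1) * ρ) ^ p :=
      one_add_mul_le_pow (by have : 0 ≤ 2 ^ (p + 1) * ρ := by positivity
                             linarith) p
    have h4 : a + 2 ^ (p + 1) * b ≤ (1 + 2 ^ (p + 1) * ρ) ^ p := by
      refine le_trans ?_ h3
      have : (2 : ℝ) ^ (p + 1) * b ≤ 2 ^ (p + 1) * (p * ρ) := by gcongr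
      linarith
    gcongr
  have hc1 : (1 : ℝ) ≤ 2 ^ (p + 1) := one_le_pow₀ (by norm_num)
  rw [show (2 : ℝ) ^ (p + 1 + 2) = 4 * 2 ^ (p + 1) by ring]
  rw [show (2 : ℝ) ^ (p + 1 + 1) = 2 * 2 ^ (p + 1) by ring] at hlarge
  generalize (2 : ℝ) ^ (p + 1) = c at *
  have hcρ : c * ρ ≤ 1 / 2 := by
    rw [hρ, ← mul_div_assoc, div_le_iff₀ hτ₁0]; linarith
  by_cases hδ : τ₂ ≤ τ₁
  · nlinarith
  have h8 : c * ρ * (τ₂ - τ₁) ≤ 1 / 2 * (τ₂ - τ₁) := by gcongr; linarith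
  have h9 : c * ρ * l ≤ 1 / 2 * l := by gcongr
  have h10 : c * ρ * τ₁ = c * l := by rw [mul_assoc, hρτ]
  nlinarith

/-- Let `F ≤ c exp (-γ g)` on the half-line, where the sublevel sets `{g ≤ l}` have, away from
`[0, M l]`, diameter at most `M l`. Then the integral of `F` is bounded in terms of `c`, `γ` and `M`:
on the shell `k ≤ g < k + 1`, of measure at most `3 M (k + 1)`, the bound is `c exp (-γ k)`. No
measurability of `F` or `g` is needed, as each shell is covered by two intervals. -/
lemma lintegral_profile_le {γ M : ℝ} (hM : 0 < M) {F : ℝ → ℝ≥0∞} {g : ℝ → ℝ} {c : ℝ≥0∞}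
    (hγ : 0 < γ)
    (hF : ∀ τ, 0 < τ → F τ ≠ 0 → 0 ≤ g τ ∧ F τ ≤ c * ENNReal.ofReal (Real.exp (-γ * g τ)))
    (hgap : ∀ l τ₁ τ₂, 0 < l → 0 < τ₁ → τ₁ < τ₂ → F τ₁ ≠ 0 → F τ₂ ≠ 0 → g τ₁ ≤ l → g τ₂ ≤ l →
      M * l ≤ τ₁ → τ₂ - τ₁ ≤ M * l) :
    ∫⁻ τ in Set.Ioi (0 : ℝ), F τ ≤
      c * ∑' k : ℕ, ENNReal.ofReal (Real.exp (-γ * k) * (3 * (M * (k + 1)))) := by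
  have hcover : ∀ k : ℕ, ∃ a : ℝ, ∀ τ, 0 < τ → F τ ≠ 0 → g τ ≤ k + 1 →
      τ ∈ Set.Icc 0 (M * (k + 1)) ∪ Set.Icc a (a + 2 * (M * (k + 1))) := by
    intro k
    by_cases h : ∃ τ₀, 0 < τ₀ ∧ F τ₀ ≠ 0 ∧ g τ₀ ≤ k + 1 ∧ M * (k + 1) ≤ τ₀
    · obtain ⟨τ₀, h0, h1, h2, h3⟩ := h
      refine ⟨τ₀ - M * (k + 1), fun τ hτ hFτ hg => ?_⟩
      by_cases hsmall : τ ≤ M * (k + 1)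
      · exact Or.inl ⟨hτ.le, hsmall⟩
      · push Not at hsmall
        have hk : (0 : ℝ) < k + 1 := by positivity
        right
        rcases lt_trichotomy τ τ₀ with h | h | h
        · have := hgap _ _ _ hk hτ h hFτ h1 hg h2 hsmall.le
          constructor <;> nlinarith
        · constructor <;> nlinarith
        · have := hgap _ _ _ hk h0 h h1 hFτ h2 hg h3
          constructor <;> nlinarith
    · push Not at h
      exact ⟨0, fun τ hτ hFτ hg => Or.inl ⟨hτ.le, (h τ hτ hFτ hg).le⟩⟩
  choose a ha using hcover
  set J : ℕ → Set ℝ := fun k =>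
    Set.Icc 0 (M * (k + 1)) ∪ Set.Icc (a k) (a k + 2 * (M * (k + 1))) with hJ
  have hJm : ∀ k, MeasurableSet (J k) := fun k => measurableSet_Icc.union measurableSet_Icc
  calc ∫⁻ τ in Set.Ioi (0 : ℝ), F τ
      ≤ ∫⁻ τ in Set.Ioi (0 : ℝ), ∑' k : ℕ,
          (J k).indicator (fun _ => c * ENNReal.ofReal (Real.exp (-γ * k))) τ := by
        refine setLIntegral_mono' measurableSet_Ioi fun τ hτ => ?_
        by_cases h0 : F τ = 0
        · rw [h0]; exact zero_le
        obtain ⟨hg, hle⟩ := hF τ hτ h0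
        refine le_trans ?_ (ENNReal.le_tsum ⌊g τ⌋₊)
        rw [Set.indicator_of_mem (ha _ τ hτ h0 (Nat.lt_floor_add_one _).le)]
        refine hle.trans ?_
        refine mul_le_mul' le_rfl (ENNReal.ofReal_le_ofReal (Real.exp_le_exp.2 ?_))
        have := Nat.floor_le hg
        nlinarith
    _ ≤ ∑' k : ℕ, ∫⁻ τ : ℝ, (J k).indicator (fun _ => c * ENNReal.ofReal (Real.exp (-γ * k))) τ := by
        rw [lintegral_tsum fun k => (measurable_const.indicator (hJm k)).aemeasurable]
        exact ENNReal.tsum_le_tsum fun k => setLIntegral_le_lintegral _ _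
    _ ≤ _ := by
        rw [← ENNReal.tsum_mul_left]
        refine ENNReal.tsum_le_tsum fun k => ?_
        rw [lintegral_indicator_const (hJm k), mul_assoc, ENNReal.ofReal_mul (Real.exp_pos _).le]
        gcongr
        refine (measure_union_le _ _).trans ?_
        rw [Real.volume_Icc, Real.volume_Icc, ← ENNReal.ofReal_add (by ring_nf; positivity)
          (by ring_nf; positivity)]
        apply ENNReal.ofReal_le_ofReal
        linarith

lemma tsum_profile_lt_top {γ M : ℝ} (hM : 0 < M) (hγ : 0 < γ) :
    ∑' k : ℕ, ENNReal.ofReal (Real.exp (-γ * k) * (3 * (M * (k + 1)))) < ⊤ := by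
  have hx : ‖Real.exp (-γ)‖ < 1 := by
    rw [Real.norm_of_nonneg (Real.exp_pos _).le, Real.exp_lt_one_iff]; linarith
  have h1 := summable_pow_mul_geometric_of_norm_lt_one 1 hx
  have h0 := summable_pow_mul_geometric_of_norm_lt_one 0 hx
  have hs : Summable fun k : ℕ => Real.exp (-γ * k) * (3 * (M * (k + 1))) := by
    refine ((h1.add h0).mul_left (3 * M)).congr fun k => ?_
    rw [mul_comm (-γ), Real.exp_nat_mul]
    ring
  rw [← ENNReal.ofReal_tsum_of_nonneg (fun k => by positivity) hs]
  exact ENNReal.ofReal_lt_top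

/-! ### The singular weight -/

/-- Integral of the weight `‖x‖^{-lam}` over a set of volume `m`, split at the radius `m ^ (1/n)`. -/
lemma lintegral_weight_le (hn : 2 ≤ n) {lam : ℝ} (hlam0 : 0 ≤ lam) (hlamn : lam < n) {S : Set E}
    {m : ℝ} (hm : 0 < m) (hvol : volume S = ENNReal.ofReal m) :
    ∫⁻ x in S, ENNReal.ofReal (1 / ‖x‖ ^ lam) ≤
      ENNReal.ofReal ((sphereArea n / (n - lam) + 1) * m ^ (1 - lam / n)) := by
  have hn0 : (0 : ℝ) < n := by positivity
  have hω := sphereArea_pos hn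
  set r : ℝ := m ^ (1 / (n : ℝ)) with hr
  have hr0 : 0 < r := by positivity
  have hrpow : r ^ ((n : ℝ) - lam) = m ^ (1 - lam / n) := by
    rw [hr, ← Real.rpow_mul hm.le]
    congr 1; field_simp
  have hrm : 1 / r ^ lam * m = m ^ (1 - lam / n) := by
    rw [hr, ← Real.rpow_mul hm.le, Real.rpow_sub hm, Real.rpow_one, one_div_mul_eq_div,
      one_div_mul_eq_div]
  set f : ℝ → ℝ≥0∞ := (Set.Iic r).indicator fun s => ENNReal.ofReal (1 / s ^ lam) with hf
  have hfm : Measurable f := Measurable.indicator (by fun_prop) measurableSet_Iic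
  have hrad : ∫⁻ x : E, f ‖x‖ = ENNReal.ofReal (sphereArea n / (n - lam) * m ^ (1 - lam / n)) := by
    rw [lintegral_radial hn hfm, div_mul_eq_mul_div, mul_div_assoc, ENNReal.ofReal_mul hω.le]
    congr 1
    have h1 : ∀ s ∈ Set.Ioi (0 : ℝ), ENNReal.ofReal (s ^ (n - 1)) * f s =
        (Set.Iic r).indicator (fun s => ENNReal.ofReal (s ^ ((n : ℝ) - 1 - lam))) s := by
      intro s hs
      have hs : 0 < s := hs
      by_cases h : s ∈ Set.Iic r
      · rw [hf, Set.indicator_of_mem h, Set.indicator_of_mem h, ← ENNReal.ofReal_mul (by positivity)]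
        congr 1
        rw [Real.rpow_sub hs, ← Real.rpow_natCast, Nat.cast_sub (by lia)]
        simp [div_eq_mul_inv]
      · rw [hf, Set.indicator_of_notMem h, Set.indicator_of_notMem h, mul_zero]
    rw [setLIntegral_congr_fun measurableSet_Ioi h1, setLIntegral_indicator measurableSet_Iic,
      Set.inter_comm, Set.Ioi_inter_Iic]
    have hexp : -1 < (n : ℝ) - 1 - lam := by linarith
    have hint := intervalIntegral.intervalIntegrable_rpow' (a := 0) (b := r) hexp
    rw [← ofReal_integral_eq_lintegral_ofReal]
    · rw [← intervalIntegral.integral_of_le hr0.le, integral_rpow (Or.inl hexp),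
        Real.zero_rpow (by linarith), sub_zero, ← hrpow]
      congr 2 <;> ring_nf
    · exact (intervalIntegrable_iff_integrableOn_Ioc_of_le hr0.le).1 hint
    · filter_upwards [ae_restrict_mem measurableSet_Ioc] with s hs
      exact Real.rpow_nonneg hs.1.le _
  calc ∫⁻ x in S, ENNReal.ofReal (1 / ‖x‖ ^ lam)
      ≤ ∫⁻ x in S, (f ‖x‖ + ENNReal.ofReal (1 / r ^ lam)) := by
        refine lintegral_mono fun x => ?_
        by_cases h : ‖x‖ ≤ r
        · rw [hf, Set.indicator_of_mem (Set.mem_Iic.2 h)]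
          exact le_self_add
        · refine le_add_left (ENNReal.ofReal_le_ofReal ?_)
          push Not at h
          gcongr
    _ = (∫⁻ x in S, f ‖x‖) + ENNReal.ofReal (1 / r ^ lam) * ENNReal.ofReal m := by
        rw [lintegral_add_right _ measurable_const, setLIntegral_const, hvol]
    _ ≤ (∫⁻ x : E, f ‖x‖) + ENNReal.ofReal (1 / r ^ lam) * ENNReal.ofReal m := by
        exact add_le_add (setLIntegral_le_lintegral _ _) le_rfl
    _ = _ := by
        have : 0 < (n : ℝ) - lam := by linarith
        rw [hrad, ← ENNReal.ofReal_mul (by positivity), hrm,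
          ← ENNReal.ofReal_add (by positivity) (by positivity)]
        congr 1; ring

/-! ### Volumes of superlevel sets -/

lemma moserConst_pos (hn : 2 ≤ n) : 0 < moserConst n := by
  have := sphereArea_pos hn
  have hn0 : (0 : ℝ) < n := by positivity
  unfold moserConst; positivity

/-- `(α t^{n/(n-1)})^{n-1} = t^n α^{n-1}`, which passes between the two normalizations of a level. -/
lemma mul_rpow_pow_dim (hn : 2 ≤ n) {α t : ℝ} (ht : 0 ≤ t) :
    (α * t ^ ((n : ℝ) / (n - 1))) ^ (n - 1) = t ^ n * α ^ (n - 1) := by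
  have hn' : (2 : ℝ) ≤ n := by exact_mod_cast hn
  rw [mul_pow, ← Real.rpow_natCast (t ^ _), ← Real.rpow_mul ht, Nat.cast_sub (by lia),
    Nat.cast_one, div_mul_cancel₀ _ (by linarith), mul_comm, Real.rpow_natCast]

/-- The volume of the superlevel set `{α_n |u| ^ (n/(n-1)) ≥ τ}`. -/
def levelVol (u : E → ℝ) (τ : ℝ) : ℝ :=
  volume.real {x | τ ≤ moserConst n * |u x| ^ ((n : ℝ) / (n - 1))}

/-- Translation between the levels `τ` of `α_n |u| ^ (n/(n-1))` and the levels `t` of `|u|`; the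
number `r` is, up to a dimensional factor, the radius of a ball of the same volume. -/
lemma exists_level_radius {D R τ : ℝ} (hn : 2 ≤ n) (hD : 0 < D)
    (hDvol : volume (Metric.ball (0 : E) R) ≤ ENNReal.ofReal (D ^ n))
    {u : E → ℝ} (huR : tsupport u ⊆ Metric.ball 0 R) (hτ : 0 < τ) (hm : 0 < levelVol u τ) :
    ∃ t r, 0 < t ∧ 0 < r ∧ r ≤ D ∧ moserConst n * t ^ ((n : ℝ) / (n - 1)) = τ ∧
      volume {x | t ≤ |u x|} = ENNReal.ofReal (r ^ n) ∧
      n * Real.log (D / r) + 2 * n + moserConst n =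
        n * Real.log D + 2 * n + moserConst n - Real.log (levelVol u τ) := by
  have hα := moserConst_pos hn
  have hn' : (2 : ℝ) ≤ n := by exact_mod_cast hn
  set q : ℝ := (n : ℝ) / (n - 1) with hq
  have hq0 : 0 < q := div_pos (by linarith) (by linarith)
  set t : ℝ := (τ / moserConst n) ^ (1 / q) with ht
  have ht0 : 0 < t := by positivity
  have htq : moserConst n * t ^ q = τ := by
    rw [ht, ← Real.rpow_mul (by positivity), one_div_mul_cancel hq0.ne', Real.rpow_one]
    field_simp
  have hset : {x | t ≤ |u x|} = {x | τ ≤ moserConst n * |u x| ^ q} := by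
    ext x
    simp only [Set.mem_ofPred_eq]
    rw [← htq, mul_le_mul_iff_right₀ hα, Real.rpow_le_rpow_iff ht0.le (abs_nonneg _) hq0]
  have hsub : {x | t ≤ |u x|} ⊆ Metric.ball 0 R := by
    intro x hx
    refine huR (subset_tsupport _ ?_)
    have hx : t ≤ |u x| := hx
    rw [Function.mem_support, ← abs_pos]
    linarith
  have hle := (measure_mono hsub).trans hDvol
  set m := levelVol u τ with hmdef
  have hvol : volume {x | t ≤ |u x|} = ENNReal.ofReal m := by
    rw [hmdef, levelVol, ← hq, ← hset, ofReal_measureReal (hle.trans_lt ENNReal.ofReal_lt_top).ne]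
  set r : ℝ := m ^ (1 / (n : ℝ)) with hr
  have hr0 : 0 < r := by positivity
  have hrn : r ^ n = m := by
    rw [hr, ← Real.rpow_natCast, ← Real.rpow_mul hm.le, one_div_mul_cancel (by positivity),
      Real.rpow_one]
  refine ⟨t, r, ht0, hr0, ?_, htq, by rw [hrn, hvol], ?_⟩
  · rw [hvol, ENNReal.ofReal_le_ofReal_iff (by positivity), ← hrn] at hle
    exact le_of_pow_le_pow_left₀ (by lia) hD.le hle
  · rw [Real.log_div hD.ne' hr0.ne', ← hrn, Real.log_pow]
    ring

/-- Every level is controlled by the volume of its superlevel set. -/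
lemma level_le {D R τ : ℝ} (hn : 2 ≤ n) (hD : 0 < D) (hRD : 2 * R ≤ D)
    (hDvol : volume (Metric.ball (0 : E) R) ≤ ENNReal.ofReal (D ^ n))
    {u : E → ℝ} (hu : ContDiff ℝ 1 u) (hc : HasCompactSupport u)
    (huR : tsupport u ⊆ Metric.ball 0 R) (hen : ∫⁻ x, ‖fderiv ℝ u x‖ₑ ^ (n : ℝ) ≤ 1)
    (hτ : 0 < τ) (hm : 0 < levelVol u τ) :
    τ ≤ n * Real.log D + 2 * n + moserConst n - Real.log (levelVol u τ) := by
  have hα := moserConst_pos hn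
  obtain ⟨t, r, ht, hr, hrD, htτ, hvol, hS⟩ := exists_level_radius hn hD hDvol huR hτ hm
  rw [← hS]
  have hlog : 0 ≤ Real.log (D / r) := Real.log_nonneg (by rw [le_div_iff₀ hr]; linarith)
  have h := lower_level_estimate hn hr hrD hRD hu hc huR ht hvol
  have h2 : ENNReal.ofReal (t ^ n * moserConst n ^ (n - 1)) ≤
      1 * ENNReal.ofReal ((n * Real.log (D / r) + 2 * n + moserConst n) ^ (n - 1)) :=
    h.trans (mul_le_mul' ((setLIntegral_le_lintegral _ _).trans hen) le_rfl)
  rw [one_mul, ENNReal.ofReal_le_ofReal_iff (by positivity), ← mul_rpow_pow_dim hn ht.le, htτ] at h2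
  exact le_of_pow_le_pow_left₀ (by lia) (by positivity) h2

/-- Two large levels `τ₁ < τ₂` at which the bound `level_le` is sharp up to `l` are at distance
`O(l)`. -/
lemma level_gap_volume {D R τ₁ τ₂ l : ℝ} (hn : 2 ≤ n) (hD : 0 < D) (hRD : 2 * R ≤ D)
    (hDvol : volume (Metric.ball (0 : E) R) ≤ ENNReal.ofReal (D ^ n))
    {u : E → ℝ} (hu : ContDiff ℝ 1 u) (hc : HasCompactSupport u)
    (huR : tsupport u ⊆ Metric.ball 0 R) (hen : ∫⁻ x, ‖fderiv ℝ u x‖ₑ ^ (n : ℝ) ≤ 1)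
    (hl : 0 < l) (hτ₁ : 0 < τ₁) (hτ₂ : τ₁ < τ₂) (hm₁ : 0 < levelVol u τ₁) (hm₂ : 0 < levelVol u τ₂)
    (h₁ : n * Real.log D + 2 * n + moserConst n - Real.log (levelVol u τ₁) ≤ τ₁ + l)
    (h₂ : n * Real.log D + 2 * n + moserConst n - Real.log (levelVol u τ₂) ≤ τ₂ + l)
    (hlarge : 2 ^ (n + 1) * l ≤ τ₁) :
    τ₂ - τ₁ ≤ (2 + 2 ^ (n + 2)) * l := by
  have hα := moserConst_pos hn
  have hn' : (2 : ℝ) ≤ n := by exact_mod_cast hn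
  obtain ⟨t₁, r₁, ht₁, hr₁, hrD₁, htτ₁, hvol₁, hS₁⟩ := exists_level_radius hn hD hDvol huR hτ₁ hm₁
  obtain ⟨t₂, r₂, ht₂, hr₂, hrD₂, htτ₂, hvol₂, hS₂⟩ :=
    exists_level_radius hn hD hDvol huR (hτ₁.trans hτ₂) hm₂
  rw [← hS₁] at h₁
  rw [← hS₂] at h₂
  have hlog : ∀ r, 0 < r → r ≤ D → 0 ≤ n * Real.log (D / r) + 2 * n + moserConst n := by
    intro r hr hrD
    have : 0 ≤ Real.log (D / r) := Real.log_nonneg (by rw [le_div_iff₀ hr]; linarith)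
    positivity
  have ht : t₁ < t₂ := by
    rw [← htτ₁, ← htτ₂, mul_lt_mul_iff_right₀ hα] at hτ₂
    exact (Real.rpow_lt_rpow_iff ht₁.le ht₂.le (div_pos (by linarith) (by linarith))).1 hτ₂
  have hlow := lower_level_estimate hn hr₁ hrD₁ hRD hu hc huR ht₁ hvol₁
  have hup := upper_level_estimate hn hr₂ hrD₂ hRD hu hc huR ht₁ ht hvol₂
  have hsum := lintegral_add_compl (μ := volume) (fun x => ‖fderiv ℝ u x‖ₑ ^ (n : ℝ))
    (measurableSet_le hu.continuous.abs.measurable measurable_const : MeasurableSet {x | |u x| ≤ t₁})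
  rw [← hsum] at hen
  set A := ∫⁻ x in {x | |u x| ≤ t₁}, ‖fderiv ℝ u x‖ₑ ^ (n : ℝ)
  set B := ∫⁻ x in {x | |u x| ≤ t₁}ᶜ, ‖fderiv ℝ u x‖ₑ ^ (n : ℝ)
  have hA : A ≠ ⊤ := ((le_self_add.trans hen).trans_lt ENNReal.one_lt_top).ne
  have hB : B ≠ ⊤ := ((le_add_self.trans hen).trans_lt ENNReal.one_lt_top).ne
  have hpos₁ := hlog r₁ hr₁ hrD₁
  have hpos₂ := hlog r₂ hr₂ hrD₂
  rw [← ENNReal.ofReal_toReal hA, ← ENNReal.ofReal_toReal hB,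
    ← ENNReal.ofReal_add ENNReal.toReal_nonneg ENNReal.toReal_nonneg, ENNReal.ofReal_le_one] at hen
  rw [← ENNReal.ofReal_toReal hA, ← ENNReal.ofReal_mul ENNReal.toReal_nonneg,
    ENNReal.ofReal_le_ofReal_iff (by positivity)] at hlow
  rw [← ENNReal.ofReal_toReal hA, ← ENNReal.ofReal_toReal hB,
    show (2 : ℝ≥0∞) ^ n = ENNReal.ofReal (2 ^ n) by
      rw [ENNReal.ofReal_pow zero_le_two, ENNReal.ofReal_ofNat],
    ← ENNReal.ofReal_mul (by positivity), ← ENNReal.ofReal_add (by positivity) (by positivity),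
    ← ENNReal.ofReal_mul (by positivity),
    ENNReal.ofReal_le_ofReal_iff (by positivity)] at hup
  rw [← htτ₁, ← htτ₂]
  exact level_gap hn hα ENNReal.toReal_nonneg hen ht₁ ht hl hpos₁ hpos₂ (by rwa [htτ₁])
    (by rwa [htτ₂]) (by rwa [htτ₁]) hlow hup

/-! ### One function -/

/-- The singular Moser–Trudinger inequality for one function. -/
lemma scalar_moser_trudinger (hn : 2 ≤ n) {lam : ℝ} (hlam0 : 0 ≤ lam) (hlamn : lam < n) (R : ℝ) :
    ∃ C : ℝ≥0∞, C ≠ ⊤ ∧ ∀ u : E → ℝ, ContDiff ℝ 1 u → HasCompactSupport u →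
      tsupport u ⊆ Metric.ball 0 R → ∫⁻ x, ‖fderiv ℝ u x‖ₑ ^ (n : ℝ) ≤ 1 →
      ∫⁻ x in Metric.ball (0 : E) R, ENNReal.ofReal
        (Real.exp ((1 - lam / n) * (moserConst n * |u x| ^ ((n : ℝ) / (n - 1)))) / ‖x‖ ^ lam)
        ≤ C := by
  have hα := moserConst_pos hn
  have hω := sphereArea_pos hn
  have hn' : (2 : ℝ) ≤ n := by exact_mod_cast hn
  have hn0 : (0 : ℝ) < n := by linarith
  set q : ℝ := (n : ℝ) / (n - 1) with hq
  have hq0 : 0 < q := div_pos hn0 (by linarith)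
  set γ : ℝ := 1 - lam / n with hγdef
  have hγ : 0 < γ := by rw [hγdef, sub_pos, div_lt_one hn0]; exact hlamn
  set V : ℝ := volume.real (Metric.ball (0 : E) R) with hV
  have hV0 : 0 ≤ V := measureReal_nonneg
  have hVfin : volume (Metric.ball (0 : E) R) = ENNReal.ofReal V := by
    rw [hV, ofReal_measureReal measure_ball_lt_top.ne]
  set D : ℝ := 2 * |R| + V + 1 with hD
  have hD1 : 1 ≤ D := by have := abs_nonneg R; linarith
  have hRD : 2 * R ≤ D := by have := le_abs_self R; linarith
  have hDvol : volume (Metric.ball (0 : E) R) ≤ ENNReal.ofReal (D ^ n) := by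
    rw [hVfin]
    apply ENNReal.ofReal_le_ofReal
    have := abs_nonneg R
    have := le_self_pow₀ hD1 (show n ≠ 0 by lia)
    linarith
  set κ : ℝ := n * Real.log D + 2 * n + moserConst n with hκ
  set c₁ : ℝ := sphereArea n / (n - lam) + 1 with hc₁
  have hc₁0 : 0 < c₁ := by
    have : 0 < (n : ℝ) - lam := by linarith
    positivity
  set M : ℝ := 2 + 2 ^ (n + 2) with hM
  have hM0 : 0 < M := by positivity
  set w : E → ℝ≥0∞ := fun x => ENNReal.ofReal (1 / ‖x‖ ^ lam) with hw
  have hwm : Measurable w := by fun_prop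
  set μ : Measure E := (volume.restrict (Metric.ball (0 : E) R)).withDensity w with hμ
  have hμuniv : μ Set.univ ≠ ⊤ := by
    rw [hμ, withDensity_apply _ MeasurableSet.univ, Measure.restrict_univ]
    rcases hV0.eq_or_lt with h0 | h0
    · rw [setLIntegral_measure_zero _ _ (by rw [hVfin, ← h0, ENNReal.ofReal_zero])]
      exact ENNReal.zero_ne_top
    · exact ne_top_of_le_ne_top ENNReal.ofReal_ne_top
        (lintegral_weight_le hn hlam0 hlamn h0 hVfin)
  refine ⟨μ Set.univ + ENNReal.ofReal (c₁ * γ * Real.exp (γ * κ)) *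
    ∑' k : ℕ, ENNReal.ofReal (Real.exp (-γ * k) * (3 * (M * (k + 1)))), ?_, ?_⟩
  · exact ENNReal.add_ne_top.2 ⟨hμuniv,
      ENNReal.mul_ne_top ENNReal.ofReal_ne_top (tsum_profile_lt_top hM0 hγ).ne⟩
  intro u hu hc huR hen
  set f : E → ℝ := fun x => moserConst n * |u x| ^ q with hf
  have hfm : Measurable f := by
    have := hu.continuous.measurable
    fun_prop
  have hf0 : ∀ x, 0 ≤ f x := fun x => by positivity
  -- `exp (γ f) = 1 + ∫₀^f γ exp (γ t) dt`
  have hexp : ∀ x, ENNReal.ofReal (Real.exp (γ * f x)) =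
      1 + ENNReal.ofReal (∫ t in (0 : ℝ)..f x, γ * Real.exp (γ * t)) := by
    intro x
    have h1 : ∫ t in (0 : ℝ)..f x, γ * Real.exp (γ * t) = Real.exp (γ * f x) - 1 := by
      simp
    have h2 : 1 ≤ Real.exp (γ * f x) := Real.one_le_exp (mul_nonneg hγ.le (hf0 x))
    rw [h1, ← ENNReal.ofReal_one, ← ENNReal.ofReal_add zero_le_one (by linarith)]
    congr 1; ring
  have hstart : ∫⁻ x in Metric.ball (0 : E) R,
      ENNReal.ofReal (Real.exp (γ * f x) / ‖x‖ ^ lam) =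
      ∫⁻ x, ENNReal.ofReal (Real.exp (γ * f x)) ∂μ := by
    rw [hμ, lintegral_withDensity_eq_lintegral_mul _ hwm (by fun_prop)]
    refine lintegral_congr fun x => ?_
    change _ = ENNReal.ofReal (1 / ‖x‖ ^ lam) * ENNReal.ofReal (Real.exp (γ * f x))
    rw [mul_comm (ENNReal.ofReal _), ← ENNReal.ofReal_mul (Real.exp_pos _).le, mul_one_div]
  rw [hstart, lintegral_congr hexp, lintegral_add_left measurable_const, lintegral_one,
    lintegral_comp_eq_lintegral_meas_le_mul μ (ae_of_all _ hf0) hfm.aemeasurable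
      (fun t _ => (by fun_prop : Continuous fun t => γ * Real.exp (γ * t)).intervalIntegrable _ _)
      (ae_of_all _ fun t => by positivity)]
  gcongr
  have hμle : ∀ τ, 0 < τ → μ {x | τ ≤ f x} ≠ 0 → 0 < levelVol u τ ∧
      μ {x | τ ≤ f x} ≤ ENNReal.ofReal (c₁ * levelVol u τ ^ γ) := by
    intro τ hτ hne
    have hSm : MeasurableSet {x | τ ≤ f x} := measurableSet_le measurable_const hfm
    have hsub : {x | τ ≤ f x} ⊆ Metric.ball 0 R := by
      intro x hx
      refine huR (subset_tsupport _ fun h0 => ?_)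
      have hx : τ ≤ moserConst n * |u x| ^ q := hx
      rw [h0, abs_zero, Real.zero_rpow hq0.ne', mul_zero] at hx
      linarith
    have hvol : volume {x | τ ≤ f x} = ENNReal.ofReal (levelVol u τ) := by
      rw [levelVol, ofReal_measureReal ((measure_mono hsub).trans_lt measure_ball_lt_top).ne]
    have hμS : μ {x | τ ≤ f x} = ∫⁻ x in {x | τ ≤ f x}, w x := by
      rw [hμ, withDensity_apply _ hSm, Measure.restrict_restrict hSm,
        Set.inter_eq_self_of_subset_left hsub]
    have hpos : 0 < levelVol u τ := by
      by_contra! h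
      apply hne
      rw [hμS, setLIntegral_measure_zero _ _ (by rw [hvol, ENNReal.ofReal_of_nonpos h])]
    exact ⟨hpos, hμS.le.trans (lintegral_weight_le hn hlam0 hlamn hpos hvol)⟩
  refine lintegral_profile_le (g := fun τ => κ - Real.log (levelVol u τ) - τ) hM0 hγ ?_ ?_
  · intro τ hτ hne
    obtain ⟨hpos, hle⟩ := hμle τ hτ (left_ne_zero_of_mul hne)
    refine ⟨sub_nonneg.2 (level_le hn (by linarith) hRD hDvol hu hc huR hen hτ hpos), ?_⟩
    refine (mul_le_mul' hle le_rfl).trans ?_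
    rw [← ENNReal.ofReal_mul (by positivity), ← ENNReal.ofReal_mul (by positivity)]
    refine ENNReal.ofReal_le_ofReal (le_of_eq ?_)
    rw [Real.rpow_def_of_pos hpos]
    have : Real.exp (Real.log (levelVol u τ) * γ) * Real.exp (γ * τ) = Real.exp (γ * κ) *
        Real.exp (-γ * (κ - Real.log (levelVol u τ) - τ)) := by
      rw [← Real.exp_add, ← Real.exp_add]; congr 1; ring
    linear_combination c₁ * γ * this
  · intro l τ₁ τ₂ hl hτ₁ hτ₂ hne₁ hne₂ h₁ h₂ hlarge
    refine level_gap_volume hn (by linarith) hRD hDvol hu hc huR hen hl hτ₁ hτ₂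
      (hμle τ₁ hτ₁ (left_ne_zero_of_mul hne₁)).1
      (hμle τ₂ (hτ₁.trans hτ₂) (left_ne_zero_of_mul hne₂)).1 (by linarith) (by linarith) ?_
    refine le_trans ?_ hlarge
    gcongr
    rw [hM, show (2 : ℝ) ^ (n + 2) = 2 * 2 ^ (n + 1) by ring]
    have : (0 : ℝ) < 2 ^ (n + 1) := by positivity
    linarith

/-! ### Two functions -/

/-- The Dirichlet energy over `Ω` as a lower Lebesgue integral over the whole space. -/
lemma lintegral_enorm_fderiv_rpow (hn : 2 ≤ n) {Ω : Set E} {u : E → ℝ} (hu : IsCcSmooth Ω u) :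
    ∫⁻ x, ‖fderiv ℝ u x‖ₑ ^ (n : ℝ) =
      ENNReal.ofReal (∫ x in Ω, ‖gradient u x‖ ^ (n : ℝ)) := by
  obtain ⟨hu1, hc, hΩ⟩ := hu
  have hn0 : (0 : ℝ) < n := by positivity
  have hgrad : ∀ x, ‖gradient u x‖ = ‖fderiv ℝ u x‖ := fun x => by
    rw [gradient, LinearIsometryEquiv.norm_map]
  have hcont : Continuous (fderiv ℝ u) := hu1.continuous_fderiv (by simp)
  have hcn : Continuous fun x => ‖fderiv ℝ u x‖ ^ (n : ℝ) :=
    hcont.norm.rpow_const fun _ => Or.inr hn0.le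
  have hcs : HasCompactSupport fun x => ‖fderiv ℝ u x‖ ^ (n : ℝ) :=
    (hc.fderiv ℝ).comp_left (g := fun L : E →L[ℝ] ℝ => ‖L‖ ^ (n : ℝ))
      (by simp [Real.zero_rpow hn0.ne'])
  simp only [hgrad]
  rw [setIntegral_eq_integral_of_forall_compl_eq_zero,
    ofReal_integral_eq_lintegral_ofReal (hcn.integrable_of_hasCompactSupport hcs)
      (ae_of_all _ fun x => by positivity)]
  · refine lintegral_congr fun x => ?_
    rw [← ENNReal.ofReal_rpow_of_nonneg (norm_nonneg _) hn0.le, ofReal_norm]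
  · intro x hx
    have : fderiv ℝ u x = 0 := by
      by_contra h
      exact hx (hΩ (support_fderiv_subset ℝ h))
    rw [this, norm_zero, Real.zero_rpow hn0.ne']

/-- A function with compact support and zero energy vanishes. -/
lemma eq_zero_of_energy_eq_zero (hn : 2 ≤ n) {u : E → ℝ} (hu : ContDiff ℝ 1 u)
    (hc : HasCompactSupport u) (h0 : ∫⁻ x, ‖fderiv ℝ u x‖ₑ ^ (n : ℝ) = 0) : u = 0 := by
  have hn0 : (0 : ℝ) < n := by positivity
  have : Nonempty (Fin n) := ⟨⟨0, by lia⟩⟩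
  have hcont : Continuous (fderiv ℝ u) := hu.continuous_fderiv one_ne_zero
  rw [lintegral_eq_zero_iff (hcont.enorm.measurable.pow_const _)] at h0
  have hae : fderiv ℝ u =ᵐ[volume] fun _ => 0 := by
    filter_upwards [h0] with x hx
    have hx : ‖fderiv ℝ u x‖ₑ ^ (n : ℝ) = 0 := hx
    have hx := (ENNReal.rpow_eq_zero_iff_of_pos hn0).1 hx
    rwa [← ofReal_norm, ENNReal.ofReal_eq_zero, norm_le_zero_iff] at hx
  have hall : fderiv ℝ u = fun _ => 0 := Measure.eq_of_ae_eq hae hcont continuous_const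
  have hconst := is_const_of_fderiv_eq_zero (hu.differentiable one_ne_zero) (congrFun hall)
  by_contra hne
  obtain ⟨x, hx⟩ := Function.ne_iff.1 hne
  have hsupp : Function.support u = Set.univ := by
    ext y
    simp only [Function.mem_support, Set.mem_univ, iff_true]
    rw [hconst y x]
    exact hx
  have : IsCompact (tsupport u) := hc
  rw [tsupport, hsupp, closure_univ] at this
  exact noncompact_univ E this

/-- Every admissible function is a multiple of one with energy at most `1`. -/
lemma exists_normalized (hn : 2 ≤ n) {Ω : Set E} {u : E → ℝ} (hu : IsCcSmooth Ω u) :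
    ∃ U : E → ℝ, ContDiff ℝ 1 U ∧ HasCompactSupport U ∧ tsupport U ⊆ Ω ∧
      ∫⁻ x, ‖fderiv ℝ U x‖ₑ ^ (n : ℝ) ≤ 1 ∧
      ∀ x, |u x| ^ ((n : ℝ) / (n - 1)) =
        (∫ x in Ω, ‖gradient u x‖ ^ (n : ℝ)) ^ (1 / ((n : ℝ) - 1)) *
          |U x| ^ ((n : ℝ) / (n - 1)) := by
  have hn' : (2 : ℝ) ≤ n := by exact_mod_cast hn
  have hn0 : (0 : ℝ) < n := by linarith
  have hn1 : (0 : ℝ) < (n : ℝ) - 1 := by linarith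
  have hen := lintegral_enorm_fderiv_rpow hn hu
  obtain ⟨hu1, hc, hΩ⟩ := hu
  have hu1 : ContDiff ℝ 1 u := hu1.of_le (by exact_mod_cast le_top)
  set A : ℝ := ∫ x in Ω, ‖gradient u x‖ ^ (n : ℝ) with hA
  have hA0 : 0 ≤ A := integral_nonneg fun x => by positivity
  rcases hA0.eq_or_lt with h0 | h0
  · rw [← h0, ENNReal.ofReal_zero] at hen
    have hz := eq_zero_of_energy_eq_zero hn hu1 hc hen
    refine ⟨u, hu1, hc, hΩ, hen.le.trans zero_le_one, fun x => ?_⟩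
    rw [hz, Pi.zero_apply, abs_zero, Real.zero_rpow (by positivity), mul_zero]
  · set a : ℝ := A ^ (1 / (n : ℝ)) with ha
    have ha0 : 0 < a := by positivity
    refine ⟨fun x => a⁻¹ * u x, contDiff_const.mul hu1, hc.mul_left, ?_, ?_, fun x => ?_⟩
    · exact (tsupport_mul_subset_right (f := fun _ => a⁻¹) (g := u)).trans hΩ
    · have hd : ∀ x, ‖fderiv ℝ (fun x => a⁻¹ * u x) x‖ₑ ^ (n : ℝ) =
          ENNReal.ofReal A⁻¹ * ‖fderiv ℝ u x‖ₑ ^ (n : ℝ) := by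
        intro x
        rw [fderiv_const_mul (hu1.differentiable one_ne_zero x), enorm_smul,
          ENNReal.mul_rpow_of_nonneg _ _ hn0.le]
        congr 1
        rw [← ofReal_norm, Real.norm_of_nonneg (by positivity),
          ENNReal.ofReal_rpow_of_nonneg (by positivity) hn0.le, Real.inv_rpow ha0.le, ha,
          ← Real.rpow_mul hA0, one_div_mul_cancel hn0.ne', Real.rpow_one]
      rw [lintegral_congr hd, lintegral_const_mul' _ _ ENNReal.ofReal_ne_top, hen,
        ← ENNReal.ofReal_mul (by positivity), inv_mul_cancel₀ h0.ne', ENNReal.ofReal_one]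
    · rw [abs_mul, abs_of_pos (by positivity : 0 < a⁻¹),
        Real.mul_rpow (by positivity) (abs_nonneg _), Real.inv_rpow ha0.le, ha,
        ← Real.rpow_mul hA0, ← mul_assoc]
      rw [show 1 / (n : ℝ) * (n / (n - 1)) = 1 / ((n : ℝ) - 1) by field_simp,
        mul_inv_cancel₀ (by positivity), one_mul]

/-- The power mean inequality, which is the source of the constant `2_n`. -/
lemma rpow_add_rpow_le_two_rpow (hn : 2 ≤ n) {A B : ℝ} (hA : 0 ≤ A) (hB : 0 ≤ B)
    (hAB : A + B ≤ 1) :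
    A ^ (1 / ((n : ℝ) - 1)) + B ^ (1 / ((n : ℝ) - 1)) ≤ 2 ^ (((n : ℝ) - 2) / (n - 1)) := by
  have hn' : (2 : ℝ) ≤ n := by exact_mod_cast hn
  have hp : (0 : ℝ) < (n : ℝ) - 1 := by linarith
  have hc : ∀ (a b : NNReal) (p : ℝ), 1 ≤ p →
      ((a : ℝ) + b) ^ p ≤ 2 ^ (p - 1) * ((a : ℝ) ^ p + (b : ℝ) ^ p) := fun a b p h => by
    exact_mod_cast NNReal.rpow_add_le_mul_rpow_add_rpow a b h
  have h : (A ^ (1 / ((n : ℝ) - 1)) + B ^ (1 / ((n : ℝ) - 1))) ^ ((n : ℝ) - 1) ≤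
      2 ^ ((n : ℝ) - 1 - 1) * ((A ^ (1 / ((n : ℝ) - 1))) ^ ((n : ℝ) - 1) +
        (B ^ (1 / ((n : ℝ) - 1))) ^ ((n : ℝ) - 1)) := hc ⟨A ^ (1 / ((n : ℝ) - 1)), by positivity⟩ ⟨B ^ (1 / ((n : ℝ) - 1)), by positivity⟩
    ((n : ℝ) - 1) (by linarith)
  rw [← Real.rpow_mul hA, ← Real.rpow_mul hB, one_div_mul_cancel hp.ne', Real.rpow_one,
    Real.rpow_one] at h
  have h2 : (A ^ (1 / ((n : ℝ) - 1)) + B ^ (1 / ((n : ℝ) - 1))) ^ ((n : ℝ) - 1) ≤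
      (2 ^ (((n : ℝ) - 2) / (n - 1))) ^ ((n : ℝ) - 1) := by
    rw [← Real.rpow_mul zero_le_two, div_mul_cancel₀ _ hp.ne',
      show (n : ℝ) - 2 = n - 1 - 1 by ring]
    refine h.trans (mul_le_of_le_one_right (by positivity) hAB)
  exact (Real.rpow_le_rpow_iff (by positivity) (by positivity) hp).1 h2

end Estimates

/-- Singular Moser–Trudinger inequality in the Cartesian product of Sobolev spaces
(sufficiency part). -/
theorem product_singular_moser_trudinger
    (n : ℕ) (hn : 2 ≤ n)
    (Ω : Set (EuclideanSpace ℝ (Fin n))) (hΩo : IsOpen Ω) (hΩb : Bornology.IsBounded Ω)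
    (lam : ℝ) (hlam0 : 0 ≤ lam) (hlamn : lam < n)
    (β : ℝ) (hβ0 : 0 < β)
    (hβ : (2 : ℝ) ^ (((n : ℝ) - 2) / ((n : ℝ) - 1)) * β / moserConst n + lam / n ≤ 1) :
    ∃ C : ℝ, ∀ u v : EuclideanSpace ℝ (Fin n) → ℝ,
      IsCcSmooth Ω u → IsCcSmooth Ω v →
      (∫ x in Ω, ‖gradient u x‖ ^ (n : ℝ)) + (∫ x in Ω, ‖gradient v x‖ ^ (n : ℝ)) ≤ 1 →
      (∫⁻ x in Ω, ENNReal.ofReal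
          (Real.exp (β * (|u x| ^ ((n : ℝ) / ((n : ℝ) - 1)) +
            |v x| ^ ((n : ℝ) / ((n : ℝ) - 1)))) / ‖x‖ ^ lam)) ≤ ENNReal.ofReal C := by
  obtain ⟨R, hR⟩ := hΩb.subset_ball (0 : EuclideanSpace ℝ (Fin n))
  obtain ⟨C, hC, hscalar⟩ := scalar_moser_trudinger hn hlam0 hlamn R
  have hα := moserConst_pos hn
  refine ⟨(C + C).toReal, fun u v hu hv huv => ?_⟩
  rw [ENNReal.ofReal_toReal (ENNReal.add_ne_top.2 ⟨hC, hC⟩)]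
  obtain ⟨U, hU1, hUc, hUΩ, hUen, hUu⟩ := exists_normalized hn hu
  obtain ⟨V, hV1, hVc, hVΩ, hVen, hVv⟩ := exists_normalized hn hv
  have hCU := hscalar U hU1 hUc (hUΩ.trans hR) hUen
  have hCV := hscalar V hV1 hVc (hVΩ.trans hR) hVen
  have hA0 : 0 ≤ ∫ x in Ω, ‖gradient u x‖ ^ (n : ℝ) := integral_nonneg fun x => by positivity
  have hB0 : 0 ≤ ∫ x in Ω, ‖gradient v x‖ ^ (n : ℝ) := integral_nonneg fun x => by positivity
  have hst := rpow_add_rpow_le_two_rpow hn hA0 hB0 huv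
  simp only [hUu, hVv]
  set s : ℝ := (∫ x in Ω, ‖gradient u x‖ ^ (n : ℝ)) ^ (1 / ((n : ℝ) - 1))
  set t : ℝ := (∫ x in Ω, ‖gradient v x‖ ^ (n : ℝ)) ^ (1 / ((n : ℝ) - 1))
  have hs : 0 ≤ s := by positivity
  have ht : 0 ≤ t := by positivity
  have hβst : β * (s + t) ≤ (1 - lam / n) * moserConst n := by
    have h1 : (2 : ℝ) ^ (((n : ℝ) - 2) / ((n : ℝ) - 1)) * β / moserConst n ≤ 1 - lam / n := by
      linarith
    rw [div_le_iff₀ hα] at h1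
    nlinarith
  -- the exponent is at most `(1 - lam / n) α_n` times the larger of the two powers
  have hexp : ∀ X Y : ℝ, 0 ≤ X → 0 ≤ Y → Real.exp (β * (s * X + t * Y)) ≤
      Real.exp ((1 - lam / n) * (moserConst n * X)) +
        Real.exp ((1 - lam / n) * (moserConst n * Y)) := by
    intro X Y hX hY
    have h1 : β * (s * X + t * Y) ≤ (1 - lam / n) * moserConst n * max X Y := by
      calc β * (s * X + t * Y) ≤ β * (s * max X Y + t * max X Y) := by
            gcongr
            · exact le_max_left _ _
            · exact le_max_right _ _
        _ = β * (s + t) * max X Y := by ring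
        _ ≤ _ := mul_le_mul_of_nonneg_right hβst (hX.trans (le_max_left _ _))
    have h2 := Real.exp_le_exp.2 h1
    have hXp := Real.exp_pos ((1 - lam / n) * (moserConst n * X))
    have hYp := Real.exp_pos ((1 - lam / n) * (moserConst n * Y))
    rcases max_choice X Y with h | h <;> rw [h, mul_assoc] at h2 <;> linarith
  have hmeas : Measurable fun x : EuclideanSpace ℝ (Fin n) => ENNReal.ofReal
      (Real.exp ((1 - lam / n) * (moserConst n * |U x| ^ ((n : ℝ) / (n - 1)))) / ‖x‖ ^ lam) := by
    have := hU1.continuous.measurable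
    fun_prop
  refine le_trans ?_ (add_le_add hCU hCV)
  rw [← lintegral_add_left hmeas]
  refine (lintegral_mono_set hR).trans (lintegral_mono fun x => ?_)
  rw [← ENNReal.ofReal_add (by positivity) (by positivity), ← add_div]
  refine ENNReal.ofReal_le_ofReal ?_
  gcongr
  exact hexp _ _ (by positivity) (by positivity)
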